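/- arXiv:2310.12556 — 4 statements merged into one kernel-verified Lean document; each statement's English description precedes it below -/
import Mathlib

section
/- Let H = H_{m,𝓑,S,A} be the parity-check matrix of an APM-LDPC code. For every cycle of length 2l in the Tanner graph TG(H), there exists a chain (i_0, j_0, i_1, j_1, …, i_{l−1}, j_{l−1}) with i_l := i_0, recording the blocks of H traversed by the cycle, such that for each 1 ≤ k ≤ l: {i_{k−1}, i_k} ⊆ B_{j_{k−1}}, i_{k−1} ≠ i_k, j_{k−1} ≠ j_{k mod l}, and, defining p_h = ∏_{k=h}^{l−1} a_{i_{k+1},j_k}·a_{i_k,j_k}^{−1} mod m for 0 ≤ h ≤ l−1 with p_l := 1, and Δ = Σ_{k=0}^{l−1} (p_k·s_{i_k,j_k} − p_{k+1}·s_{i_{k+1},j_k}), one of the following holds: (1) p_0 = 1 and Δ ≡ 0 (mod m), or (2) gcd(p_0 − 1, m) divides Δ. -/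
/-!
Statement 0: Every 2l-cycle in the Tanner graph of the APM parity-check matrix
H_{m,𝓑,S,A} corresponds to a chain (i_0,j_0,…,i_{l−1},j_{l−1}) satisfying the
modular conditions of Theorem 1 of the paper.
-/

/-- Vertex type of the Tanner graph of a `v m × k m` block matrix:
check nodes `(i, r)` (row-block `i`, row index `r` within the block) and
variable nodes `(j, c)` (column-block `j`, column index `c` within the block). -/
abbrev TannerVertex (v k m : ℕ) := (Fin v × ZMod m) ⊕ (Fin k × ZMod m)

/-- The Tanner graph of `H_{m,𝓑,S,A}`, where `Bl j` is the block `B_j` of the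
design `𝓑`, `S` is the `(m,𝓑)`-slope vector, and `a` is the `(m,𝓑)`-shift
vector (with values the units of `ℤ_m`, i.e. residues coprime to `m`):
a check node `(i, r)` is adjacent to a variable node `(j, c)` iff `i ∈ B_j` and
`r = a_{i,j}·c + s_{i,j}` (the `(r,c)` entry of the APM `I^{s_{i,j},a_{i,j}}`
equals 1). -/
def apmTannerGraph (v k m : ℕ) (Bl : Fin k → Finset (Fin v))
    (S : Fin v → Fin k → ZMod m) (a : Fin v → Fin k → (ZMod m)ˣ) :
    SimpleGraph (TannerVertex v k m) :=
  SimpleGraph.fromRel (fun x y =>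
    ∃ (i : Fin v) (r : ZMod m) (j : Fin k) (c : ZMod m),
      x = Sum.inl (i, r) ∧ y = Sum.inr (j, c) ∧ i ∈ Bl j ∧
        r = (a i j : ZMod m) * c + S i j)

theorem apm_adj_lr {v k m : ℕ} {Bl : Fin k → Finset (Fin v)} {S : Fin v → Fin k → ZMod m}
    {a : Fin v → Fin k → (ZMod m)ˣ} {x : Fin v × ZMod m} {y : Fin k × ZMod m}
    (h : (apmTannerGraph v k m Bl S a).Adj (Sum.inl x) (Sum.inr y)) :
    x.1 ∈ Bl y.1 ∧ x.2 = (a x.1 y.1 : ZMod m) * y.2 + S x.1 y.1 := by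
  rw [apmTannerGraph, SimpleGraph.fromRel_adj] at h
  obtain ⟨-, ⟨i, r, j, c, e1, e2, h1, h2⟩ | ⟨i, r, j, c, e1, e2, h1, h2⟩⟩ := h
  · cases e1
    cases e2
    exact ⟨h1, h2⟩
  · cases e1

theorem apm_adj_l {v k m : ℕ} {Bl : Fin k → Finset (Fin v)} {S : Fin v → Fin k → ZMod m}
    {a : Fin v → Fin k → (ZMod m)ˣ} {x : Fin v × ZMod m} {z : TannerVertex v k m}
    (h : (apmTannerGraph v k m Bl S a).Adj (Sum.inl x) z) : ∃ y, z = Sum.inr y := by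
  rw [apmTannerGraph, SimpleGraph.fromRel_adj] at h
  obtain ⟨-, ⟨i, r, j, c, e1, e2, h1, h2⟩ | ⟨i, r, j, c, e1, e2, h1, h2⟩⟩ := h
  · exact ⟨_, e2⟩
  · cases e2

theorem apm_adj_r {v k m : ℕ} {Bl : Fin k → Finset (Fin v)} {S : Fin v → Fin k → ZMod m}
    {a : Fin v → Fin k → (ZMod m)ˣ} {x : Fin k × ZMod m} {z : TannerVertex v k m}
    (h : (apmTannerGraph v k m Bl S a).Adj (Sum.inr x) z) : ∃ y, z = Sum.inl y := by
  rw [apmTannerGraph, SimpleGraph.fromRel_adj] at h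
  obtain ⟨-, ⟨i, r, j, c, e1, e2, h1, h2⟩ | ⟨i, r, j, c, e1, e2, h1, h2⟩⟩ := h
  · cases e1
  · exact ⟨_, e1⟩

theorem apm_core (v k m l : ℕ)
    (Bl : Fin k → Finset (Fin v)) (S : Fin v → Fin k → ZMod m)
    (a : Fin v → Fin k → (ZMod m)ˣ) (g : ℕ → TannerVertex v k m)
    (hper : ∀ n, g (n + 2 * l) = g n)
    (hadj : ∀ n, (apmTannerGraph v k m Bl S a).Adj (g n) (g (n + 1)))
    (hne : ∀ n, g n ≠ g (n + 2)) (h0 : ∃ x, g 0 = Sum.inl x) :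
    ∃ (i : ℕ → Fin v) (j : ℕ → Fin k),
      i l = i 0 ∧
      (∀ t < l, i t ∈ Bl (j t) ∧ i (t + 1) ∈ Bl (j t) ∧ i t ≠ i (t + 1) ∧
        j t ≠ j ((t + 1) % l)) ∧
      (let p : ℕ → (ZMod m)ˣ := fun h =>
        ∏ t ∈ Finset.Ico h l, a (i (t + 1)) (j t) * (a (i t) (j t))⁻¹
       let Δ : ZMod m := ∑ t ∈ Finset.range l,
        ((p t : ZMod m) * S (i t) (j t) - (p (t + 1) : ZMod m) * S (i (t + 1)) (j t))
       (p 0 = 1 ∧ Δ = 0) ∨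
        (Nat.gcd (((p 0 : ZMod m) - 1).val) m ∣ Δ.val)) ∧
      (∀ t, (∃ r, g (2 * t) = Sum.inl (i t, r)) ∧ (∃ c, g (2 * t + 1) = Sum.inr (j t, c))) := by
  have hstep : ∀ n, (∃ x, g n = Sum.inl x) → ∃ y, g (n + 1) = Sum.inr y := by
    rintro n ⟨x, hx⟩
    have := hadj n
    rw [hx] at this
    exact apm_adj_l this
  have hstep' : ∀ n, (∃ x, g n = Sum.inr x) → ∃ y, g (n + 1) = Sum.inl y := by
    rintro n ⟨x, hx⟩
    have := hadj n
    rw [hx] at this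
    exact apm_adj_r this
  have hL : ∀ t, ∃ x, g (2 * t) = Sum.inl x := by
    intro t
    induction t with
    | zero => exact h0
    | succ t ih => exact hstep' _ (hstep _ ih)
  have hR : ∀ t, ∃ x, g (2 * t + 1) = Sum.inr x := fun t => hstep _ (hL t)
  choose x hx using hL
  choose y hy using hR
  have h1 : ∀ t, (x t).1 ∈ Bl (y t).1 ∧
      (x t).2 = (a (x t).1 (y t).1 : ZMod m) * (y t).2 + S (x t).1 (y t).1 := by
    intro t
    have := hadj (2 * t)
    rw [hx, hy] at this
    exact apm_adj_lr this
  have h2 : ∀ t, (x (t + 1)).1 ∈ Bl (y t).1 ∧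
      (x (t + 1)).2 = (a (x (t + 1)).1 (y t).1 : ZMod m) * (y t).2 + S (x (t + 1)).1 (y t).1 := by
    intro t
    have := hadj (2 * t + 1)
    rw [show 2 * t + 1 + 1 = 2 * (t + 1) by ring, hx, hy] at this
    exact apm_adj_lr this.symm
  have hxl : x l = x 0 := by
    have := hper 0
    rw [zero_add, hx l] at this
    have h := hx 0
    rw [mul_zero] at h
    rw [h] at this
    exact Sum.inl.inj this
  have hyl : y l = y 0 := by
    have := hper 1
    rw [add_comm, hy l] at this
    have h := hy 0
    rw [mul_zero, zero_add] at h
    rw [h] at this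
    exact Sum.inr.inj this
  refine ⟨fun t => (x t).1, fun t => (y t).1, by simp [hxl], ?_, ?_, ?_⟩
  · intro t ht
    refine ⟨(h1 t).1, (h2 t).1, ?_, ?_⟩
    · intro h
      dsimp only at h
      apply hne (2 * t)
      rw [show 2 * t + 2 = 2 * (t + 1) by ring, hx, hx]
      congr 1
      refine Prod.ext h ?_
      rw [(h1 t).2, (h2 t).2, h]
    · have hmod : y ((t + 1) % l) = y (t + 1) := by
        rcases Nat.lt_or_ge (t + 1) l with h | h
        · rw [Nat.mod_eq_of_lt h]
        · have : t + 1 = l := by omega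
          rw [this, Nat.mod_self, hyl]
      dsimp only
      rw [hmod]
      intro h
      apply hne (2 * t + 1)
      rw [show 2 * t + 1 + 2 = 2 * (t + 1) + 1 by ring, hy, hy]
      congr 1
      refine Prod.ext h ?_
      have e1 := (h2 t).2
      have e2 := (h1 (t + 1)).2
      rw [h] at e1
      rw [e1] at e2
      exact (Units.mul_right_inj _).1 (add_right_cancel e2)
  · intro p Δ
    right
    have hp : ∀ t < l, p t = (a (x (t + 1)).1 (y t).1 * (a (x t).1 (y t).1)⁻¹) * p (t + 1) := by
      intro t ht
      exact Finset.prod_eq_prod_Ico_succ_bot ht _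
    have hpl : p l = 1 := by simp [p]
    have hΔ : Δ = ((p 0 : ZMod m) - 1) * (x 0).2 := by
      have : Δ = ∑ t ∈ Finset.range l,
          ((p t : ZMod m) * (x t).2 - (p (t + 1) : ZMod m) * (x (t + 1)).2) := by
        refine Finset.sum_congr rfl fun t ht => ?_
        have ht := Finset.mem_range.1 ht
        have hu : (p t : ZMod m) * (a (x t).1 (y t).1 : ZMod m)
            = (p (t + 1) : ZMod m) * (a (x (t + 1)).1 (y t).1 : ZMod m) := by
          rw [← Units.val_mul, ← Units.val_mul, hp t ht]
          congr 1
          rw [mul_right_comm, inv_mul_cancel_right, mul_comm]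
        rw [(h1 t).2, (h2 t).2]
        linear_combination -(y t).2 * hu
      rw [this, Finset.sum_range_sub', hpl, hxl]
      push_cast
      ring
    clear_value Δ
    subst hΔ
    generalize (p 0 : ZMod m) - 1 = q
    rcases Nat.eq_zero_or_pos m with rfl | hm
    · rw [Nat.gcd_zero_right]
      exact ⟨Int.natAbs (x 0).2, Int.natAbs_mul q (x 0).2⟩
    · rw [ZMod.val_mul]
      exact (Nat.dvd_mod_iff (Nat.gcd_dvd_right _ _)).2 ((Nat.gcd_dvd_left _ _).mul_right _)
  · exact fun t => ⟨⟨_, hx t⟩, ⟨_, hy t⟩⟩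

theorem every_apm_cycle_gives_chain
    (v k m l : ℕ) (hl : 0 < l)
    (Bl : Fin k → Finset (Fin v)) (S : Fin v → Fin k → ZMod m)
    (a : Fin v → Fin k → (ZMod m)ˣ)
    (u : TannerVertex v k m)
    (C : (apmTannerGraph v k m Bl S a).Walk u u)
    (hC : C.IsCycle) (hlen : C.length = 2 * l) :
    ∃ (i : ℕ → Fin v) (j : ℕ → Fin k),
      -- `i l = i 0`
      i l = i 0 ∧
      -- chain conditions: for each `1 ≤ k ≤ l` (reindexed by `t = k−1 < l`),
      -- `{i_{k−1}, i_k} ⊆ B_{j_{k−1}}`, `i_{k−1} ≠ i_k`, `j_{k−1} ≠ j_{k mod l}`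
      (∀ t < l, i t ∈ Bl (j t) ∧ i (t + 1) ∈ Bl (j t) ∧ i t ≠ i (t + 1) ∧
        j t ≠ j ((t + 1) % l)) ∧
      -- with `p_h = ∏_{k=h}^{l−1} a_{i_{k+1},j_k}·a_{i_k,j_k}⁻¹ (mod m)`
      -- (so `p_l = 1`) and `Δ = Σ_{k=0}^{l−1} (p_k·s_{i_k,j_k} − p_{k+1}·s_{i_{k+1},j_k})`,
      -- either `p_0 = 1` and `Δ ≡ 0 (mod m)`, or `gcd(p_0 − 1, m) ∣ Δ`
      (let p : ℕ → (ZMod m)ˣ := fun h =>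
        ∏ t ∈ Finset.Ico h l, a (i (t + 1)) (j t) * (a (i t) (j t))⁻¹
       let Δ : ZMod m := ∑ t ∈ Finset.range l,
        ((p t : ZMod m) * S (i t) (j t) - (p (t + 1) : ZMod m) * S (i (t + 1)) (j t))
       (p 0 = 1 ∧ Δ = 0) ∨
        (Nat.gcd (((p 0 : ZMod m) - 1).val) m ∣ Δ.val)) ∧
      -- the chain records the blocks of `H` traversed by the cycle
      ((∀ t < l, (∃ r, C.getVert (2 * t) = Sum.inl (i t, r)) ∧
          (∃ c, C.getVert (2 * t + 1) = Sum.inr (j t, c))) ∨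
       (∀ t < l, (∃ c, C.getVert (2 * t) = Sum.inr (j t, c)) ∧
          (∃ r, C.getVert (2 * t + 1) = Sum.inl (i ((t + 1) % l), r)))) := by
  have h3 := hC.three_le_length
  have hl2 : 2 ≤ l := by omega
  set f : ℕ → TannerVertex v k m := fun n => C.getVert (n % (2 * l)) with hf
  have fper : ∀ n, f (n + 2 * l) = f n := fun n => by simp [hf]
  have flt : ∀ n < 2 * l, f n = C.getVert n := fun n hn => by simp [hf, Nat.mod_eq_of_lt hn]
  have fadj : ∀ n, (apmTannerGraph v k m Bl S a).Adj (f n) (f (n + 1)) := by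
    intro n
    have hlt : n % (2 * l) < 2 * l := Nat.mod_lt _ (by omega)
    have h := C.adj_getVert_succ (i := n % (2 * l)) (by omega)
    have e : f (n + 1) = C.getVert (n % (2 * l) + 1) := by
      simp only [hf]
      rw [← Nat.mod_add_mod]
      rcases Nat.lt_or_ge (n % (2 * l) + 1) (2 * l) with h | h
      · rw [Nat.mod_eq_of_lt h]
      · have : n % (2 * l) + 1 = 2 * l := by omega
        rw [this, Nat.mod_self, ← hlen]
        simp
    rw [e]
    exact h
  have fne : ∀ n, f n ≠ f (n + 2) := by
    intro n h
    have hlt : n % (2 * l) < 2 * l := Nat.mod_lt _ (by omega)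
    have hlt' : (n + 2) % (2 * l) < 2 * l := Nat.mod_lt _ (by omega)
    have h := hC.getVert_injOn' (by simp only [Set.mem_ofPred_eq]; omega)
      (by simp only [Set.mem_ofPred_eq]; omega) h
    rw [← Nat.mod_add_mod] at h
    rcases Nat.lt_or_ge (n % (2 * l) + 2) (2 * l) with h' | h'
    · rw [Nat.mod_eq_of_lt h'] at h
      omega
    · have e : (n % (2 * l) + 2) % (2 * l) = n % (2 * l) + 2 - 2 * l := by
        rw [Nat.mod_eq_sub_mod h', Nat.mod_eq_of_lt (a := n % (2 * l) + 2 - 2 * l) (by omega)]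
      rw [e] at h
      omega
  rcases hu : f 0 with z | z
  · obtain ⟨i, j, hi, hch, hd, hr⟩ := apm_core v k m l Bl S a f fper fadj fne ⟨z, hu⟩
    refine ⟨i, j, hi, hch, hd, Or.inl fun t ht => ?_⟩
    rw [← flt _ (by omega), ← flt _ (by omega)]
    exact hr t
  · have hz : ∃ w, f (0 + (2 * l - 1)) = Sum.inl w := by
      have h := fadj (0 + (2 * l - 1))
      rw [show 0 + (2 * l - 1) + 1 = 0 + 2 * l by omega, fper, hu] at h
      exact apm_adj_r h.symm
    obtain ⟨i, j, hi, hch, hd, hr⟩ := apm_core v k m l Bl S a (fun n => f (n + (2 * l - 1)))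
      (fun n => by
        rw [← fper (n + (2 * l - 1))]
        congr 1
        omega)
      (fun n => by
        have := fadj (n + (2 * l - 1))
        rwa [show n + (2 * l - 1) + 1 = n + 1 + (2 * l - 1) by omega] at this)
      (fun n => by
        have := fne (n + (2 * l - 1))
        rwa [show n + (2 * l - 1) + 2 = n + 2 + (2 * l - 1) by omega] at this) hz
    refine ⟨i, j, hi, hch, hd, Or.inr fun t ht => ?_⟩
    rw [← flt _ (by omega), ← flt _ (by omega)]
    constructor
    · obtain ⟨c, hc⟩ := (hr t).2
      refine ⟨c, ?_⟩
      rw [← fper, ← hc]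
      congr 1
      omega
    · obtain ⟨r, hr'⟩ := (hr (t + 1)).1
      refine ⟨r, ?_⟩
      have hmod : i ((t + 1) % l) = i (t + 1) := by
        rcases Nat.lt_or_ge (t + 1) l with h | h
        · rw [Nat.mod_eq_of_lt h]
        · have : t + 1 = l := by omega
          rw [this, Nat.mod_self, hi]
      rw [hmod, ← fper, ← hr']
      congr 1
      omega
end

section
/- For every cycle of length 2l in the Tanner graph TG(H_{m,𝓑,S}), there exists a sequence (i_0, j_0, i_1, j_1, …, i_{l−1}, j_{l−1}) with i_l := i_0, recording the blocks of H_{m,𝓑,S} traversed by the cycle, such that for each 0 ≤ k ≤ l−1: {i_k, i_{k+1}} ⊆ B_{j_k}, i_k ≠ i_{k+1}, j_k ≠ j_{(k+1) mod l}, and Σ_{k=0}^{l−1} (s_{i_k,j_k} − s_{i_{k+1},j_k}) ≡ 0 (mod m); that is, every 2l-cycle of TG(H_{m,𝓑,S}) corresponds to a 2l-cycle chain. -/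
/-- The Tanner graph of `H_{m,𝓑,S}`, where `Bl j` is the block `B_j` of the
design `𝓑` (the row indices of the nonzero entries of the `j`-th column of the
base matrix) and `S` is the `(m,𝓑)`-slope vector: a check node `(i, r)` is
adjacent to a variable node `(j, c)` iff `i ∈ B_j` and `r = c + s_{i,j}`
(the `(r,c)` entry of the CPM `I^{s_{i,j}}` equals 1). -/
def qcTannerGraph (v k m : ℕ) (Bl : Fin k → Finset (Fin v))
    (S : Fin v → Fin k → ZMod m) : SimpleGraph (TannerVertex v k m) :=
  SimpleGraph.fromRel (fun x y =>
    ∃ (i : Fin v) (r : ZMod m) (j : Fin k) (c : ZMod m),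
      x = Sum.inl (i, r) ∧ y = Sum.inr (j, c) ∧ i ∈ Bl j ∧ r = c + S i j)

theorem qc_core_chain
    (v k m l : ℕ) (hl : 0 < l)
    (Bl : Fin k → Finset (Fin v)) (S : Fin v → Fin k → ZMod m)
    (w : ℕ → TannerVertex v k m)
    (hper : ∀ n, w (n + 2 * l) = w n)
    (hadj : ∀ n, (qcTannerGraph v k m Bl S).Adj (w n) (w (n + 1)))
    (hne : ∀ n, w n ≠ w (n + 2))
    (h0 : ∃ x, w 0 = Sum.inl x) :
    ∃ (i : ℕ → Fin v) (j : ℕ → Fin k),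
      (∀ t, i (t + l) = i t) ∧
      (∀ t, i t ∈ Bl (j t) ∧ i (t + 1) ∈ Bl (j t) ∧ i t ≠ i (t + 1) ∧
        j t ≠ j ((t + 1) % l)) ∧
      (∑ t ∈ Finset.range l, (S (i t) (j t) - S (i (t + 1)) (j t))) = 0 ∧
      (∀ t, (∃ r, w (2 * t) = Sum.inl (i t, r)) ∧
          (∃ c, w (2 * t + 1) = Sum.inr (j t, c))) := by
  have hA : ∀ n x, w n = Sum.inl x → ∃ y, w (n + 1) = Sum.inr y := by
    intro n x hx
    have h := hadj n
    rw [hx] at h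
    simp only [qcTannerGraph, SimpleGraph.fromRel_adj] at h
    rcases h with ⟨_, ⟨i, r, j, c, h1, h2, _⟩ | ⟨i, r, j, c, h1, h2, _⟩⟩
    · exact ⟨_, h2⟩
    · cases h2
  have hB : ∀ n x, w n = Sum.inr x → ∃ y, w (n + 1) = Sum.inl y := by
    intro n x hx
    have h := hadj n
    rw [hx] at h
    simp only [qcTannerGraph, SimpleGraph.fromRel_adj] at h
    rcases h with ⟨_, ⟨i, r, j, c, h1, h2, _⟩ | ⟨i, r, j, c, h1, h2, _⟩⟩
    · cases h1
    · exact ⟨_, h1⟩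
  have hE : ∀ t, ∃ x, w (2 * t) = Sum.inl x := by
    intro t
    induction t with
    | zero => exact h0
    | succ t ih =>
      obtain ⟨x, hx⟩ := ih
      obtain ⟨y, hy⟩ := hA _ _ hx
      exact hB _ _ hy
  have hO : ∀ t, ∃ x, w (2 * t + 1) = Sum.inr x := by
    intro t
    obtain ⟨x, hx⟩ := hE t
    exact hA _ _ hx
  choose a ha using hE
  choose b hb using hO
  have ha1 : ∀ t, w (2 * t + 2) = Sum.inl (a (t + 1)) := fun t => ha (t + 1)
  have hb1 : ∀ t, w (2 * t + 3) = Sum.inr (b (t + 1)) := fun t => hb (t + 1)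
  have hap : ∀ t, a (t + l) = a t := by
    intro t
    have h := hper (2 * t)
    rw [← Nat.mul_add, ha, ha] at h
    exact Sum.inl_injective h
  have hbp : ∀ t, b (t + l) = b t := by
    intro t
    have h := hper (2 * t + 1)
    rw [show 2 * t + 1 + 2 * l = 2 * (t + l) + 1 by ring, hb, hb] at h
    exact Sum.inr_injective h
  have hbm : ∀ t, b (t % l) = b t := fun t => Function.Periodic.map_mod_nat hbp t
  have h1 : ∀ t, (a t).1 ∈ Bl (b t).1 ∧ (a t).2 = (b t).2 + S (a t).1 (b t).1 := by
    intro t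
    have h := hadj (2 * t)
    rw [ha, hb] at h
    simp only [qcTannerGraph, SimpleGraph.fromRel_adj] at h
    rcases h with ⟨_, ⟨i, r, j, c, h1, h2, h3, h4⟩ | ⟨i, r, j, c, h1, h2, _⟩⟩
    · rw [Sum.inl_injective h1, Sum.inr_injective h2]; exact ⟨h3, h4⟩
    · cases h2
  have h2 : ∀ t, (a (t + 1)).1 ∈ Bl (b t).1 ∧
      (a (t + 1)).2 = (b t).2 + S (a (t + 1)).1 (b t).1 := by
    intro t
    have h := hadj (2 * t + 1)
    rw [ha1, hb] at h
    simp only [qcTannerGraph, SimpleGraph.fromRel_adj] at h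
    rcases h with ⟨_, ⟨i, r, j, c, h1, h2, _⟩ | ⟨i, r, j, c, h1, h2, h3, h4⟩⟩
    · cases h2
    · rw [Sum.inl_injective h1, Sum.inr_injective h2]; exact ⟨h3, h4⟩
  refine ⟨fun t => (a t).1, fun t => (b t).1, fun t => by simp only [hap], ?_, ?_, ?_⟩
  · intro t
    refine ⟨(h1 t).1, (h2 t).1, ?_, ?_⟩
    · intro he
      apply hne (2 * t)
      rw [ha, ha1]
      congr 1
      refine Prod.ext he ?_
      rw [(h1 t).2, (h2 t).2]
      simp only at he
      rw [he]
    · simp only [hbm]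
      intro he
      apply hne (2 * t + 1)
      rw [hb, hb1]
      congr 1
      refine Prod.ext he ?_
      have e1 := (h2 t).2
      have e2 := (h1 (t + 1)).2
      rw [e1, he] at e2
      exact add_right_cancel e2
  · have : ∀ t, S (a t).1 (b t).1 - S (a (t + 1)).1 (b t).1 = (a t).2 - (a (t + 1)).2 := by
      intro t
      rw [(h1 t).2, (h2 t).2]; ring
    simp only [this]
    rw [Finset.sum_range_sub' (fun t => (a t).2)]
    have := hap 0
    rw [zero_add] at this
    rw [this, sub_self]
  · intro t
    exact ⟨⟨_, ha t⟩, ⟨_, hb t⟩⟩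

theorem qc_succ_mod (n N : ℕ) (hN : 1 < N) :
    ((n + 1) % N = n % N + 1 ∧ n % N + 1 < N) ∨ ((n + 1) % N = 0 ∧ n % N + 1 = N) := by
  have h := Nat.mod_lt n (show 0 < N by omega)
  rw [Nat.add_mod, Nat.mod_eq_of_lt hN]
  rcases Nat.lt_or_ge (n % N + 1) N with h' | h'
  · exact Or.inl ⟨Nat.mod_eq_of_lt h', h'⟩
  · have : n % N + 1 = N := by omega
    exact Or.inr ⟨by rw [this, Nat.mod_self], this⟩

theorem every_qc_cycle_gives_cycle_chain
    (v k m l : ℕ) (hl : 0 < l)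
    (Bl : Fin k → Finset (Fin v)) (S : Fin v → Fin k → ZMod m)
    (u : TannerVertex v k m)
    (C : (qcTannerGraph v k m Bl S).Walk u u)
    (hC : C.IsCycle) (hlen : C.length = 2 * l) :
    ∃ (i : ℕ → Fin v) (j : ℕ → Fin k),
      -- `i l = i 0`
      i l = i 0 ∧
      -- chain conditions: for each `0 ≤ t ≤ l−1`,
      -- `{i_t, i_{t+1}} ⊆ B_{j_t}`, `i_t ≠ i_{t+1}`, `j_t ≠ j_{(t+1) mod l}`
      (∀ t < l, i t ∈ Bl (j t) ∧ i (t + 1) ∈ Bl (j t) ∧ i t ≠ i (t + 1) ∧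
        j t ≠ j ((t + 1) % l)) ∧
      -- `Σ_{t=0}^{l−1} (s_{i_t,j_t} − s_{i_{t+1},j_t}) ≡ 0 (mod m)`
      (∑ t ∈ Finset.range l, (S (i t) (j t) - S (i (t + 1)) (j t))) = 0 ∧
      -- the chain records the blocks of `H` traversed by the cycle
      ((∀ t < l, (∃ r, C.getVert (2 * t) = Sum.inl (i t, r)) ∧
          (∃ c, C.getVert (2 * t + 1) = Sum.inr (j t, c))) ∨
       (∀ t < l, (∃ c, C.getVert (2 * t) = Sum.inr (j t, c)) ∧
          (∃ r, C.getVert (2 * t + 1) = Sum.inl (i ((t + 1) % l), r)))) := by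
  have h3 := hC.three_le_length
  have hl2 : 1 < 2 * l := by omega
  let w : ℕ → TannerVertex v k m := fun n => C.getVert (n % (2 * l))
  have hw : ∀ n, n < 2 * l → w n = C.getVert n := by
    intro n hn
    simp only [w, Nat.mod_eq_of_lt hn]
  have hper : ∀ n, w (n + 2 * l) = w n := by
    intro n
    simp only [w, Nat.add_mod_right]
  have hadj : ∀ n, (qcTannerGraph v k m Bl S).Adj (w n) (w (n + 1)) := by
    intro n
    have h := C.adj_getVert_succ (i := n % (2 * l))
      (by rw [hlen]; exact Nat.mod_lt _ (by omega))
    simp only [w]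
    rcases qc_succ_mod n (2 * l) hl2 with ⟨e, _⟩ | ⟨e, e'⟩
    · rw [e]; exact h
    · rw [e, SimpleGraph.Walk.getVert_zero]
      rw [e', ← hlen, SimpleGraph.Walk.getVert_length] at h
      rw [← hlen]
      exact h
  have hne : ∀ n, w n ≠ w (n + 2) := by
    intro n he
    have hh := hC.getVert_injOn' (x₁ := n % (2 * l)) (x₂ := (n + 2) % (2 * l))
      (by have := Nat.mod_lt n (show 0 < 2 * l by omega)
          simp only [Set.mem_ofPred_eq]; omega)
      (by have := Nat.mod_lt (n + 2) (show 0 < 2 * l by omega)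
          simp only [Set.mem_ofPred_eq]; omega) he
    rcases qc_succ_mod n (2 * l) hl2 with ⟨e, _⟩ | ⟨e, e'⟩ <;>
    rcases qc_succ_mod (n + 1) (2 * l) hl2 with ⟨f, _⟩ | ⟨f, f'⟩ <;>
    rw [show n + 1 + 1 = n + 2 from rfl] at f <;> omega
  rcases hu : w 0 with x | x
  · obtain ⟨i, j, p, q, s, z⟩ := qc_core_chain v k m l hl Bl S w hper hadj hne ⟨x, hu⟩
    refine ⟨i, j, by simpa using p 0, fun t _ => q t, s, Or.inl ?_⟩
    intro t ht
    rw [← hw (2 * t) (by omega), ← hw (2 * t + 1) (by omega)]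
    exact z t
  · have hlast : ∃ y, w (2 * l - 1) = Sum.inl y := by
      have h := hadj (2 * l - 1)
      have e : w (2 * l - 1 + 1) = Sum.inr x := by
        rw [← hu, ← hper 0]; congr 1; omega
      rw [e] at h
      simp only [qcTannerGraph, SimpleGraph.fromRel_adj] at h
      rcases h with ⟨_, ⟨i, r, j, c, h1, h2, _⟩ | ⟨i, r, j, c, h1, h2, _⟩⟩
      · exact ⟨_, h1⟩
      · cases h1
    obtain ⟨i, j, p, q, s, z⟩ := qc_core_chain v k m l hl Bl S (fun n => w (n + (2 * l - 1)))
      (fun n => by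
        rw [← hper (n + (2 * l - 1))]; congr 1; omega)
      (fun n => by
        have := hadj (n + (2 * l - 1))
        rw [show n + 1 + (2 * l - 1) = n + (2 * l - 1) + 1 by omega]; exact this)
      (fun n => by
        have := hne (n + (2 * l - 1))
        rw [show n + 2 + (2 * l - 1) = n + (2 * l - 1) + 2 by omega]; exact this)
      (by simpa using hlast)
    refine ⟨i, j, by simpa using p 0, fun t _ => q t, s, Or.inr ?_⟩
    intro t ht
    rw [← hw (2 * t) (by omega), ← hw (2 * t + 1) (by omega)]
    have him : i ((t + 1) % l) = i (t + 1) := Function.Periodic.map_mod_nat p (t + 1)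
    rw [him]
    have z1 := (z t).2
    have z2 := (z (t + 1)).1
    rw [show 2 * t + 1 + (2 * l - 1) = 2 * t + 2 * l by omega, hper] at z1
    rw [show 2 * (t + 1) + (2 * l - 1) = 2 * t + 1 + 2 * l by omega, hper] at z2
    exact ⟨z1, z2⟩
end

section
/- Let m be a positive integer and A ⊆ ℤ_m a nonempty subset. Then A = ⟨a⟩ for some a ∈ A if and only if p_m(A)·|A| = m. -/
/-! Statement 7: A = ⟨a⟩ for some a ∈ A iff p_m(A)·|A| = m. -/

/-- The shifted set `A + T = {a + T mod m : a ∈ A}` of a subset `A ⊆ ℤ_m`. -/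
def shiftSet (m : ℕ) (A : Finset (ZMod m)) (T : ℕ) : Finset (ZMod m) :=
  A.image (fun x => x + (T : ZMod m))

/-- The period `p_m(A)` of `A ⊆ ℤ_m`: the least positive integer `T` with
`A + T = A`. -/
noncomputable def periodOf (m : ℕ) (A : Finset (ZMod m)) : ℕ :=
  sInf {T : ℕ | 0 < T ∧ shiftSet m A T = A}

/-- The least positive integer `t` satisfying `t·p_m(A) ≡ 0 (mod m)`. -/
noncomputable def orbitLen (m : ℕ) (A : Finset (ZMod m)) : ℕ :=
  sInf {t : ℕ | 0 < t ∧ m ∣ t * periodOf m A}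

/-- `⟨a⟩ = {a + i·p_m(A) mod m : 1 ≤ i ≤ t}`, with `t` the least positive
integer satisfying `t·p_m(A) ≡ 0 (mod m)`. -/
noncomputable def orbitOf (m : ℕ) (A : Finset (ZMod m)) (a : ZMod m) : Finset (ZMod m) :=
  (Finset.Icc 1 (orbitLen m A)).image (fun i => a + ((i * periodOf m A : ℕ) : ZMod m))

theorem shift_iter (m : ℕ) (A : Finset (ZMod m)) (p : ℕ) (h : shiftSet m A p = A) (k : ℕ)
    (a : ZMod m) (ha : a ∈ A) : a + ((k * p : ℕ) : ZMod m) ∈ A := by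
  induction k with
  | zero => simpa using ha
  | succ k ih =>
    have : a + ((k * p : ℕ) : ZMod m) + (p : ZMod m) ∈ shiftSet m A p :=
      Finset.mem_image_of_mem _ ih
    rw [h] at this
    convert this using 1
    push_cast
    ring

theorem period_spec (m : ℕ) (hm : 0 < m) (A : Finset (ZMod m)) :
    0 < periodOf m A ∧ shiftSet m A (periodOf m A) = A := by
  have hne : {T : ℕ | 0 < T ∧ shiftSet m A T = A}.Nonempty := ⟨m, hm, by simp [shiftSet]⟩
  exact Nat.sInf_mem hne

theorem period_dvd (m : ℕ) (hm : 0 < m) (A : Finset (ZMod m)) : periodOf m A ∣ m := by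
  obtain ⟨hp, hs⟩ := period_spec m hm A
  by_contra hnd
  have hr : 0 < m % periodOf m A :=
    Nat.pos_of_ne_zero fun h => hnd (Nat.dvd_of_mod_eq_zero h)
  have hlt := Nat.mod_lt m hp
  have hcard : ∀ T : ℕ, (shiftSet m A T).card = A.card := fun T =>
    Finset.card_image_of_injective _ (add_left_injective _)
  have hsub : A ⊆ shiftSet m A (m % periodOf m A) := by
    intro x hx
    refine Finset.mem_image.2 ⟨_, shift_iter m A _ hs (m / periodOf m A) x hx, ?_⟩
    rw [add_assoc, ← Nat.cast_add, Nat.div_add_mod']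
    simp
  have heq := Finset.eq_of_subset_of_card_le hsub (hcard _).le
  have : periodOf m A ≤ m % periodOf m A := Nat.sInf_le ⟨hr, heq.symm⟩
  omega

theorem eq_orbit_iff (m : ℕ) (hm : 0 < m) (A : Finset (ZMod m))
    (hA : A.Nonempty) :
    (∃ a ∈ A, A = orbitOf m A a) ↔ periodOf m A * A.card = m := by
  obtain ⟨hp, hs⟩ := period_spec m hm A
  obtain ⟨q, hq⟩ := period_dvd m hm A
  have hq0 : 0 < q := by
    rcases Nat.eq_zero_or_pos q with h | h
    · subst h; omega
    · exact h
  have hdvd : ∀ t, m ∣ t * periodOf m A ↔ q ∣ t := by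
    intro t
    have gen : ∀ n p : ℕ, 0 < p → n = p * q → (n ∣ t * p ↔ q ∣ t) := by
      intro n p hp hn
      rw [hn, mul_comm t]
      exact Nat.mul_dvd_mul_iff_left hp
    exact gen m _ hp hq
  have hlen : orbitLen m A = q := by
    apply le_antisymm
    · exact Nat.sInf_le ⟨hq0, (hdvd q).2 dvd_rfl⟩
    · have hne : {t : ℕ | 0 < t ∧ m ∣ t * periodOf m A}.Nonempty :=
        ⟨q, hq0, (hdvd q).2 dvd_rfl⟩
      obtain ⟨h1, h2⟩ := Nat.sInf_mem hne
      exact Nat.le_of_dvd h1 ((hdvd _).1 h2)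
  have key : ∀ i j : ℕ, i ≤ j → 1 ≤ i → j ≤ q →
      ((i * periodOf m A : ℕ) : ZMod m) = ((j * periodOf m A : ℕ) : ZMod m) → i = j := by
    intro i j hij hi hj h
    rw [ZMod.natCast_eq_natCast_iff, Nat.modEq_iff_dvd' (Nat.mul_le_mul_right _ hij),
      ← Nat.sub_mul, hdvd] at h
    by_contra hne
    have := Nat.le_of_dvd (by omega) h
    omega
  have hcard : ∀ a, (orbitOf m A a).card = q := by
    intro a
    unfold orbitOf
    rw [hlen, Finset.card_image_of_injOn]
    · simp
    · intro i hi j hj h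
      simp only [Finset.coe_Icc, Set.mem_Icc] at hi hj
      have h' := add_left_cancel h
      rcases le_total i j with hij | hij
      · exact key i j hij hi.1 hj.2 h'
      · exact (key j i hij hj.1 hi.2 h'.symm).symm
  have hsub : ∀ a ∈ A, orbitOf m A a ⊆ A := by
    intro a ha x hx
    obtain ⟨i, -, rfl⟩ := Finset.mem_image.1 hx
    exact shift_iter m A _ hs i a ha
  constructor
  · rintro ⟨a, ha, h⟩
    have h2 : A.card = q := by
      rw [← hcard a, ← h]
    rw [h2, ← hq]
  · intro h
    obtain ⟨a, ha⟩ := hA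
    have h2 : A.card = q := Nat.eq_of_mul_eq_mul_left hp (h.trans hq)
    exact ⟨a, ha, (Finset.eq_of_subset_of_card_le (hsub a ha) (by rw [hcard, h2])).symm⟩
end

section
/- Suppose m is a prime number with m ≥ l. Then every allowable 2l-cycle chain L for H_{m,𝓑,S} satisfies n(L) < m and corresponds to exactly r(L) = m distinct 2l-cycles in TG(H_{m,𝓑,S}); consequently, the number of cycles of length 2l in the Tanner graph of the QC-LDPC code with CPM-size m equals m times the number of pairwise non-isomorphic allowable 2l-cycle chains in the base matrix. (In general, when m is prime, r(L) = 1 or r(L) = m.) -/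
/-- Row index (within its row-block) of the `t`-th check node of the closed walk
traced by the chain `(i_0,j_0,i_1,j_1,…)` in `H_{m,𝓑,S}`, starting from the
1-entry with row index `r` in block `(i_0,j_0)`. -/
def qcRow (v k m : ℕ) (S : Fin v → Fin k → ZMod m)
    (i : ℕ → Fin v) (j : ℕ → Fin k) (r : ZMod m) : ℕ → ZMod m
  | 0 => r
  | t + 1 => (qcRow v k m S i j r t - S (i t) (j t)) + S (i (t + 1)) (j t)

/-- Column index (within its column-block) of the `t`-th variable node of the
closed walk traced by the chain in `H_{m,𝓑,S}` starting from row index `r` in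
block `(i_0,j_0)`. -/
def qcCol (v k m : ℕ) (S : Fin v → Fin k → ZMod m)
    (i : ℕ → Fin v) (j : ℕ → Fin k) (r : ZMod m) (t : ℕ) : ZMod m :=
  qcRow v k m S i j r t - S (i t) (j t)

/-- `L = (i_0,j_0,…,i_{l−1},j_{l−1})` is a 2l-cycle chain for `H_{m,𝓑,S}`:
`i_l = i_0`, for each `0 ≤ t ≤ l−1` we have `{i_t, i_{t+1}} ⊆ B_{j_t}`,
`i_t ≠ i_{t+1}`, `j_t ≠ j_{(t+1) mod l}`, and
`Σ_{t=0}^{l−1} (s_{i_t,j_t} − s_{i_{t+1},j_t}) ≡ 0 (mod m)`. -/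
def IsQcCycleChain (v k m l : ℕ) (Bl : Fin k → Finset (Fin v))
    (S : Fin v → Fin k → ZMod m) (i : ℕ → Fin v) (j : ℕ → Fin k) : Prop :=
  i l = i 0 ∧
  (∀ t < l, i t ∈ Bl (j t) ∧ i (t + 1) ∈ Bl (j t) ∧ i t ≠ i (t + 1) ∧
    j t ≠ j ((t + 1) % l)) ∧
  (∑ t ∈ Finset.range l, (S (i t) (j t) - S (i (t + 1)) (j t))) = 0

/-- A chain is allowable if for every starting row `r ∈ ℤ_m` the traced closed
walk of length `2l` is a cycle, i.e. its `2l` vertices — the check nodes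
`(i_t, row_t)` and variable nodes `(j_t, col_t)`, `0 ≤ t ≤ l−1` — are pairwise
distinct. -/
def QcAllowable (v k m l : ℕ) (S : Fin v → Fin k → ZMod m)
    (i : ℕ → Fin v) (j : ℕ → Fin k) : Prop :=
  ∀ r : ZMod m, ∀ p q, p < l → q < l → p ≠ q →
    (i p, qcRow v k m S i j r p) ≠ (i q, qcRow v k m S i j r q) ∧
    (j p, qcCol v k m S i j r p) ≠ (j q, qcCol v k m S i j r q)

/-- The set of integers `e`, `1 ≤ e ≤ l−1`, such that shifting the chain by `e`
positions (indices mod `l`) leaves it unchanged: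
`(i_{(e+p) mod l}, j_{(e+p) mod l}) = (i_p, j_p)` for all `0 ≤ p ≤ l−1`. -/
def chainPeriods (v k l : ℕ) (i : ℕ → Fin v) (j : ℕ → Fin k) : Set ℕ :=
  {e | 1 ≤ e ∧ e ≤ l - 1 ∧
    ∀ p < l, (i ((e + p) % l), j ((e + p) % l)) = (i p, j p)}

/-- The least `e` as above (meaningful only when `chainPeriods` is nonempty). -/
noncomputable def chainE (v k l : ℕ) (i : ℕ → Fin v) (j : ℕ → Fin k) : ℕ :=
  sInf (chainPeriods v k l i j)

open scoped Classical in
/-- `n(L) = l / e` if such an `e` exists, and `n(L) = 1` otherwise. -/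
noncomputable def chainN (v k l : ℕ) (i : ℕ → Fin v) (j : ℕ → Fin k) : ℕ :=
  if (chainPeriods v k l i j).Nonempty then l / chainE v k l i j else 1

open scoped Classical in
/-- `I(L) = {(i_t,j_t), (i_{t+1},j_t) : 0 ≤ t ≤ e−1}` if such an `e` exists,
and `I(L) = ∅` otherwise. -/
noncomputable def chainI (v k l : ℕ) (i : ℕ → Fin v) (j : ℕ → Fin k) :
    Set (Fin v × Fin k) :=
  if (chainPeriods v k l i j).Nonempty then
    {x | ∃ t < chainE v k l i j, x = (i t, j t) ∨ x = (i ((t + 1) % l), j t)}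
  else ∅

/-- `A(b)` for a block index `b = (i,j)`: the set of all values
`Σ_{x=0}^{t} (s_{i_x,j_x} − s_{i_{x+1},j_x}) mod m` over those `0 ≤ t ≤ l−1` at
which the chain passes through block `b`, i.e. `(i_t,j_t) = b` or
`(i_{t+1},j_t) = b` (indices mod `l`). -/
def chainA (v k m l : ℕ) (S : Fin v → Fin k → ZMod m)
    (i : ℕ → Fin v) (j : ℕ → Fin k) (b : Fin v × Fin k) : Finset (ZMod m) :=
  ((Finset.range l).filter
      (fun t => (i t, j t) = b ∨ (i ((t + 1) % l), j t) = b)).image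
    (fun t => ∑ x ∈ Finset.range (t + 1),
      (S (i x) (j x) - S (i ((x + 1) % l)) (j x)))

/-- The vertex set of the closed walk of length `2l` traced by the chain in the
Tanner graph of `H_{m,𝓑,S}`, starting from the 1-entry with row index `r` in
block `(i_0,j_0)`. -/
def qcWalkVerts (v k m l : ℕ) (S : Fin v → Fin k → ZMod m)
    (i : ℕ → Fin v) (j : ℕ → Fin k) (r : ZMod m) :
    Finset (TannerVertex v k m) :=
  ((Finset.range l).image fun t => Sum.inl (i t, qcRow v k m S i j r t)) ∪
  ((Finset.range l).image fun t => Sum.inr (j t, qcCol v k m S i j r t))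

/-- Two 2l-cycle chains are isomorphic iff one is obtained from the other by a
cyclic shift through an even number of positions (a shift by `t` of the index
`0 ≤ p ≤ l−1` corresponds to a shift by `2t` positions of the chain), possibly
after reversal. -/
def ChainIso (v k l : ℕ) (c c' : (ℕ → Fin v) × (ℕ → Fin k)) : Prop :=
  ∃ t : ℕ,
    (∀ p < l, c'.1 p = c.1 ((p + t) % l) ∧ c'.2 p = c.2 ((p + t) % l)) ∨
    (∀ p < l, c'.1 p = c.1 ((t + (l - p)) % l) ∧
      c'.2 p = c.2 ((t + (l - p) + (l - 1)) % l))


theorem qcRow_eq_sum (v k m : ℕ) (S : Fin v → Fin k → ZMod m)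
    (i : ℕ → Fin v) (j : ℕ → Fin k) (r : ZMod m) (t : ℕ) :
    qcRow v k m S i j r t
      = r - ∑ x ∈ Finset.range t, (S (i x) (j x) - S (i (x + 1)) (j x)) := by
  induction t with
  | zero => simp [qcRow]
  | succ t ih => rw [qcRow, ih, Finset.sum_range_succ]; ring

theorem qcRow_add (v k m : ℕ) (S : Fin v → Fin k → ZMod m)
    (i : ℕ → Fin v) (j : ℕ → Fin k) (r d : ZMod m) (t : ℕ) :
    qcRow v k m S i j (r + d) t = qcRow v k m S i j r t + d := by
  rw [qcRow_eq_sum, qcRow_eq_sum]; ring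

theorem qcCol_add (v k m : ℕ) (S : Fin v → Fin k → ZMod m)
    (i : ℕ → Fin v) (j : ℕ → Fin k) (r d : ZMod m) (t : ℕ) :
    qcCol v k m S i j (r + d) t = qcCol v k m S i j r t + d := by
  unfold qcCol; rw [qcRow_add]; ring

/-- shift of Tanner vertices -/
def shiftV (v k m : ℕ) (d : ZMod m) : TannerVertex v k m → TannerVertex v k m :=
  Sum.map (fun x => (x.1, x.2 + d)) (fun x => (x.1, x.2 + d))

theorem qcWalkVerts_add (v k m l : ℕ) (S : Fin v → Fin k → ZMod m)
    (i : ℕ → Fin v) (j : ℕ → Fin k) (r d : ZMod m) :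
    qcWalkVerts v k m l S i j (r + d)
      = (qcWalkVerts v k m l S i j r).image (shiftV v k m d) := by
  unfold qcWalkVerts
  rw [Finset.image_union, Finset.image_image, Finset.image_image]
  simp only [qcRow_add, qcCol_add, shiftV, Function.comp_def, Sum.map_inl, Sum.map_inr]

theorem verts_shift_all (v k m l : ℕ) [NeZero m] (hp : m.Prime) (S : Fin v → Fin k → ZMod m)
    (i : ℕ → Fin v) (j : ℕ → Fin k) (r r' : ZMod m) (hne : r ≠ r')
    (h : qcWalkVerts v k m l S i j r = qcWalkVerts v k m l S i j r') (q : ZMod m) :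
    qcWalkVerts v k m l S i j q = qcWalkVerts v k m l S i j r := by
  have := Fact.mk hp
  obtain ⟨d, rfl⟩ : ∃ d, r' = r + d := ⟨r' - r, by ring⟩
  have hd : d ≠ 0 := by rintro rfl; simp at hne
  have key : ∀ n : ℕ, qcWalkVerts v k m l S i j (r + n * d) = qcWalkVerts v k m l S i j r := by
    intro n
    induction n with
    | zero => simp
    | succ n ih =>
      have : r + ((n + 1 : ℕ) : ZMod m) * d = (r + n * d) + d := by push_cast; ring
      rw [this, qcWalkVerts_add, ih, ← qcWalkVerts_add, ← h]
  have := key ((q - r) / d).val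
  rw [ZMod.natCast_val, ZMod.cast_id', id, div_mul_cancel₀ _ hd] at this
  rw [← this]; congr 1; ring

theorem card_image_const_or_inj {α β : Type*} [Fintype α] [DecidableEq β] (f : α → β)
    (h : ∀ x y, x ≠ y → f x = f y → ∀ q, f q = f x) :
    (Finset.univ.image f).card = 1 ∨ (Finset.univ.image f).card = Fintype.card α := by
  by_cases hi : Function.Injective f
  · right; rw [Finset.card_image_of_injective _ hi, Finset.card_univ]
  · left
    simp only [Function.Injective, not_forall] at hi
    obtain ⟨x, y, hxy, hne⟩ := hi
    rw [Finset.card_eq_one]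
    refine ⟨f x, ?_⟩
    ext z
    simp only [Finset.mem_image, Finset.mem_univ, true_and, Finset.mem_singleton]
    constructor
    · rintro ⟨q, rfl⟩; exact h x y hne hxy q
    · rintro rfl; exact ⟨x, rfl⟩

theorem chain_two_le {v k m l : ℕ} (hl : 0 < l) {Bl : Fin k → Finset (Fin v)}
    {S : Fin v → Fin k → ZMod m} {i : ℕ → Fin v} {j : ℕ → Fin k}
    (h : IsQcCycleChain v k m l Bl S i j) : 2 ≤ l := by
  by_contra hc
  obtain rfl : l = 1 := by omega
  exact (h.2.1 0 (by norm_num)).2.2.1 (by simpa using h.1.symm)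

theorem verts_inj {v k m l : ℕ} [NeZero m] (hp : m.Prime) (hl : 0 < l) (hlm : l ≤ m)
    {Bl : Fin k → Finset (Fin v)}
    {S : Fin v → Fin k → ZMod m} {i : ℕ → Fin v} {j : ℕ → Fin k}
    (h : IsQcCycleChain v k m l Bl S i j) :
    Function.Injective (fun r : ZMod m => qcWalkVerts v k m l S i j r) := by
  intro r r' he
  by_contra hne
  have h2 := chain_two_le hl h
  have hall := verts_shift_all v k m l hp S i j r r' hne he
  have hmem : ∀ q : ZMod m, ∃ t < l, i t = i 0 ∧ qcRow v k m S i j r t = q := by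
    intro q
    have : (Sum.inl (i 0, q) : TannerVertex v k m) ∈ qcWalkVerts v k m l S i j r := by
      rw [← hall q]
      unfold qcWalkVerts
      refine Finset.mem_union_left _ (Finset.mem_image.2 ⟨0, by simpa using hl, ?_⟩)
      simp [qcRow]
    unfold qcWalkVerts at this
    simp only [Finset.mem_union, Finset.mem_image, Finset.mem_range, Sum.inl.injEq,
      Prod.mk.injEq, reduceCtorEq, and_false, exists_false, or_false] at this
    exact this
  choose f hf1 hf2 hf3 using hmem
  have hfi : Function.Injective f := by
    intro a b hab
    rw [← hf3 a, ← hf3 b, hab]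
  have hne1 : ∀ q, f q ≠ 1 := by
    intro q h1
    have := hf2 q
    rw [h1] at this
    exact (h.2.1 0 hl).2.2.1 this.symm
  have hc : (Finset.univ.image f).card ≤ ((Finset.range l).erase 1).card := by
    apply Finset.card_le_card
    intro x hx
    simp only [Finset.mem_image, Finset.mem_univ, true_and] at hx
    obtain ⟨q, rfl⟩ := hx
    simp [hne1, hf1]
  rw [Finset.card_image_of_injective _ hfi, Finset.card_univ, ZMod.card,
    Finset.card_erase_of_mem (by simp; omega), Finset.card_range] at hc
  omega

theorem chainN_lt {v k m l : ℕ} (hp : m.Prime) (hl : 0 < l) (hlm : l ≤ m)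
    {Bl : Fin k → Finset (Fin v)}
    {S : Fin v → Fin k → ZMod m} {i : ℕ → Fin v} {j : ℕ → Fin k}
    (h : IsQcCycleChain v k m l Bl S i j) : chainN v k l i j < m := by
  have h2 := chain_two_le hl h
  unfold chainN
  split_ifs with hne
  · have he := Nat.sInf_mem hne
    change chainE v k l i j ∈ _ at he
    obtain ⟨h1, h3, h4⟩ := he
    have : chainE v k l i j ≠ 1 := by
      intro h1
      have := h4 0 hl
      rw [h1] at this
      simp only [Nat.add_zero, Nat.mod_eq_of_lt (show 1 < l by omega), Prod.mk.injEq] at this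
      exact (h.2.1 0 hl).2.2.1 this.1.symm
    exact lt_of_lt_of_le (Nat.div_lt_self hl (by omega)) hlm
  · exact hp.one_lt

/-- periodic functional form of cycles -/
def CycF {V : Type*} (G : SimpleGraph V) (n : ℕ) : Set (ℕ → V) :=
  {f | (∀ x, f (x + n) = f x) ∧ Set.InjOn f {x | x < n} ∧ ∀ x, G.Adj (f x) (f (x + 1))}

/-- walk following a sequence -/
def seqWalk {V : Type*} (G : SimpleGraph V) (f : ℕ → V) (h : ∀ x, G.Adj (f x) (f (x + 1))) :
    (n : ℕ) → G.Walk (f 0) (f n)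
  | 0 => SimpleGraph.Walk.nil
  | n + 1 => (seqWalk G f h n).concat (h n)

theorem seqWalk_length {V : Type*} (G : SimpleGraph V) (f : ℕ → V)
    (h : ∀ x, G.Adj (f x) (f (x + 1))) (n : ℕ) : (seqWalk G f h n).length = n := by
  induction n with
  | zero => rfl
  | succ n ih => simp [seqWalk, ih]

theorem seqWalk_getVert {V : Type*} (G : SimpleGraph V) (f : ℕ → V)
    (h : ∀ x, G.Adj (f x) (f (x + 1))) (n : ℕ) (x : ℕ) (hx : x ≤ n) :
    (seqWalk G f h n).getVert x = f x := by
  induction n with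
  | zero => obtain rfl : x = 0 := by omega
            rfl
  | succ n ih =>
    rcases Nat.lt_or_ge x (n + 1) with hlt | hge
    · rw [seqWalk, SimpleGraph.Walk.concat_eq_append, SimpleGraph.Walk.getVert_append,
        seqWalk_length]
      split_ifs with h1
      · exact ih (by omega)
      · obtain rfl : x = n := by omega
        simp
    · obtain rfl : x = n + 1 := by omega
      have := (seqWalk G f h (n+1)).getVert_length
      rw [seqWalk_length] at this
      exact this

theorem per_mod {V : Type*} {f : ℕ → V} {n : ℕ} (h : ∀ x, f (x + n) = f x) (x : ℕ) :
    f (x % n) = f x := by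
  have key : ∀ q y, f (y + n * q) = f y := by
    intro q
    induction q with
    | zero => simp
    | succ q ih => intro y; rw [Nat.mul_succ, ← add_assoc, h, ih]
  conv_rhs => rw [← Nat.mod_add_div x n]
  rw [key]

theorem card_cycF {V : Type*} (G : SimpleGraph V) (n : ℕ) (hn : 3 ≤ n) :
    Set.ncard {p : (u : V) × G.Walk u u | p.2.IsCycle ∧ p.2.length = n} = (CycF G n).ncard := by
  refine Set.ncard_congr (fun p _ x => p.2.getVert (x % n)) ?_ ?_ ?_
  · rintro ⟨u, p⟩ ⟨hc, hlen⟩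
    simp only at hc hlen
    refine ⟨fun x => by simp, ?_, ?_⟩
    · intro x hx y hy hxy
      simp only [Set.mem_ofPred_eq] at hx hy
      simp only [Nat.mod_eq_of_lt hx, Nat.mod_eq_of_lt hy] at hxy
      exact hc.getVert_injOn' (by simp; omega) (by simp; omega) hxy
    · intro x
      simp only
      have hx : x % n < n := Nat.mod_lt _ (by omega)
      have h1 := p.adj_getVert_succ (i := x % n) (by omega)
      have h2 : p.getVert ((x + 1) % n) = p.getVert (x % n + 1) := by
        rw [Nat.add_mod, Nat.mod_eq_of_lt (show 1 < n by omega)]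
        rcases Nat.lt_or_ge (x % n + 1) n with h | h
        · rw [Nat.mod_eq_of_lt h]
        · have h3 : x % n + 1 = n := by omega
          rw [h3, Nat.mod_self]
          conv_rhs => rw [← hlen]
          simp
      rw [h2]; exact h1
  · rintro ⟨u, p⟩ ⟨w, q⟩ ⟨hc, hlen⟩ ⟨hc', hlen'⟩ he
    simp only at hc hlen hc' hlen' he
    have h0 := congrFun he 0
    simp only [Nat.zero_mod, SimpleGraph.Walk.getVert_zero] at h0
    subst h0
    congr 1
    apply SimpleGraph.Walk.ext_getVert_le_length (by rw [hlen, hlen'])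
    intro x hx
    rcases Nat.lt_or_ge x n with h | h
    · have := congrFun he x
      simpa only [Nat.mod_eq_of_lt h] using this
    · rw [SimpleGraph.Walk.getVert_of_length_le _ (by omega),
        SimpleGraph.Walk.getVert_of_length_le _ (by omega)]
  · rintro f ⟨hper, hinj, hadj⟩
    have hn0 : f n = f 0 := by simpa using hper 0
    refine ⟨⟨f 0, (seqWalk G f hadj n).copy rfl hn0⟩, ⟨?_, ?_⟩, ?_⟩
    · simp only
      rw [SimpleGraph.Walk.isCycle_iff_isPath_tail_and_le_length]
      refine ⟨?_, by simp [seqWalk_length, hn]⟩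
      rw [← SimpleGraph.Walk.IsPath.getVert_injOn_iff]
      intro x hx y hy hxy
      simp only [SimpleGraph.Walk.length_tail, SimpleGraph.Walk.length_copy, seqWalk_length,
        Set.mem_ofPred_eq] at hx hy
      simp only [SimpleGraph.Walk.getVert_tail, SimpleGraph.Walk.getVert_copy] at hxy
      rw [seqWalk_getVert _ _ _ _ _ (by omega), seqWalk_getVert _ _ _ _ _ (by omega),
        ← per_mod hper (x + 1), ← per_mod hper (y + 1)] at hxy
      have := hinj (Nat.mod_lt _ (by omega)) (Nat.mod_lt _ (by omega)) hxy
      rcases Nat.lt_or_ge (x + 1) n with h | h <;> rcases Nat.lt_or_ge (y + 1) n with h' | h'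
      · rw [Nat.mod_eq_of_lt h, Nat.mod_eq_of_lt h'] at this; omega
      · have h3 : y + 1 = n := by omega
        rw [h3, Nat.mod_self, Nat.mod_eq_of_lt h] at this; omega
      · have h3 : x + 1 = n := by omega
        rw [h3, Nat.mod_self, Nat.mod_eq_of_lt h'] at this; omega
      · omega
    · simp [seqWalk_length]
    · funext x
      simp only [SimpleGraph.Walk.getVert_copy]
      rw [seqWalk_getVert _ _ _ _ _ (Nat.mod_lt _ (by omega)).le, per_mod hper]

/-- cyclic pairs of injective sequences -/
def CycD {α β : Type*} (E : α → β → Prop) (l : ℕ) : Set ((ZMod l → α) × (ZMod l → β)) :=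
  {d | Function.Injective d.1 ∧ Function.Injective d.2 ∧
    ∀ t, E (d.1 t) (d.2 t) ∧ E (d.1 (t + 1)) (d.2 t)}

/-- interleaving -/
def interl {α β : Type*} {l : ℕ} (d : (ZMod l → α) × (ZMod l → β)) (x : ℕ) : α ⊕ β :=
  if x % 2 = 0 then Sum.inl (d.1 ((x / 2 : ℕ) : ZMod l)) else Sum.inr (d.2 ((x / 2 : ℕ) : ZMod l))

theorem interl_even {α β : Type*} {l : ℕ} (d : (ZMod l → α) × (ZMod l → β)) (x : ℕ) :
    interl d (2 * x) = Sum.inl (d.1 (x : ZMod l)) := by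
  simp [interl]

theorem interl_odd {α β : Type*} {l : ℕ} (d : (ZMod l → α) × (ZMod l → β)) (x : ℕ) :
    interl d (2 * x + 1) = Sum.inr (d.2 (x : ZMod l)) := by
  have h1 : (2 * x + 1) % 2 = 1 := by omega
  have h2 : (2 * x + 1) / 2 = x := by omega
  simp [interl, h1, h2]

theorem natCast_inj_lt {l x y : ℕ} (hx : x < l) (hy : y < l)
    (h : (x : ZMod l) = (y : ZMod l)) : x = y := by
  rw [ZMod.natCast_eq_natCast_iff'] at h
  rwa [Nat.mod_eq_of_lt hx, Nat.mod_eq_of_lt hy] at h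

theorem CycF_shift {V : Type*} {G : SimpleGraph V} {n : ℕ} (hn : 0 < n) {f : ℕ → V}
    (hf : f ∈ CycF G n) (s : ℕ) : (fun x => f (x + s)) ∈ CycF G n := by
  obtain ⟨h1, h2, h3⟩ := hf
  refine ⟨fun x => ?_, ?_, fun x => ?_⟩
  · simp only; rw [add_right_comm, h1]
  · intro x hx y hy hxy
    simp only [Set.mem_ofPred_eq] at hx hy hxy
    rw [← per_mod h1 (x + s), ← per_mod h1 (y + s)] at hxy
    have := h2 (Nat.mod_lt _ hn) (Nat.mod_lt _ hn) hxy
    have h4 : x ≡ y [MOD n] := Nat.ModEq.add_right_cancel' s this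
    unfold Nat.ModEq at h4
    rwa [Nat.mod_eq_of_lt hx, Nat.mod_eq_of_lt hy] at h4
  · simp only; rw [add_right_comm]; exact h3 _

section
variable {α β : Type*} {E : α → β → Prop} {G : SimpleGraph (α ⊕ β)} {l : ℕ}

theorem interl_mem (hl : 2 ≤ l) (hG : ∀ a b, G.Adj (Sum.inl a) (Sum.inr b) ↔ E a b)
    {d : (ZMod l → α) × (ZMod l → β)} (hd : d ∈ CycD E l) : interl d ∈ CycF G (2 * l) := by
  obtain ⟨h1, h2, h3⟩ := hd
  refine ⟨fun x => ?_, ?_, fun x => ?_⟩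
  · have e1 : (x + 2 * l) % 2 = x % 2 := by omega
    have e2 : (x + 2 * l) / 2 = x / 2 + l := by omega
    simp [interl, e1, e2]
  · intro x hx y hy hxy
    simp only [Set.mem_ofPred_eq] at hx hy
    simp only [interl] at hxy
    split_ifs at hxy with ha hb hb
    · have := natCast_inj_lt (by omega) (by omega) (h1 (Sum.inl.inj hxy)); omega
    · have := natCast_inj_lt (by omega) (by omega) (h2 (Sum.inr.inj hxy)); omega
  · obtain ⟨y, rfl | rfl⟩ : ∃ y, x = 2 * y ∨ x = 2 * y + 1 := ⟨x / 2, by omega⟩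
    · rw [interl_even, interl_odd, hG]; exact (h3 _).1
    · have : 2 * y + 1 + 1 = 2 * (y + 1) := by ring
      rw [interl_odd, this, interl_even, G.adj_comm, hG]; push_cast; exact (h3 _).2

theorem interl_surj (hl : 2 ≤ l) (hG : ∀ a b, G.Adj (Sum.inl a) (Sum.inr b) ↔ E a b)
    (hll : ∀ a b, ¬ G.Adj (Sum.inl a) (Sum.inl b)) (hrr : ∀ a b, ¬ G.Adj (Sum.inr a) (Sum.inr b))
    {f : ℕ → α ⊕ β} (hf : f ∈ CycF G (2 * l)) (h0 : (f 0).isLeft = true) :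
    ∃ d ∈ CycD E l, interl d = f := by
  have : NeZero l := ⟨by omega⟩
  obtain ⟨h1, h2, h3⟩ := hf
  have hpar : ∀ x, (∃ a, f (2 * x) = Sum.inl a) ∧ ∃ b, f (2 * x + 1) = Sum.inr b := by
    have step : ∀ x, (∃ a, f (2 * x) = Sum.inl a) → ∃ b, f (2 * x + 1) = Sum.inr b := by
      rintro x ⟨a, ha⟩
      have := h3 (2 * x)
      rw [ha] at this
      rcases hb : f (2 * x + 1) with b | b
      · rw [hb] at this; exact absurd this (hll _ _)
      · exact ⟨b, rfl⟩
    intro x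
    induction x with
    | zero =>
      have : ∃ a, f (2 * 0) = Sum.inl a := Sum.isLeft_iff.1 h0
      exact ⟨this, step _ this⟩
    | succ x ih =>
      obtain ⟨-, b, hb⟩ := ih
      have : ∃ a, f (2 * (x + 1)) = Sum.inl a := by
        have := h3 (2 * x + 1)
        rw [hb] at this
        rcases ha : f (2 * (x + 1)) with a | a
        · exact ⟨a, rfl⟩
        · have e : 2 * x + 1 + 1 = 2 * (x + 1) := by ring
          rw [e, ha] at this; exact absurd this (hrr _ _)
      exact ⟨this, step _ this⟩
  choose a ha using fun x => (hpar x).1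
  choose b hb using fun x => (hpar x).2
  have pa : ∀ x, a (x + l) = a x := by
    intro x; apply Sum.inl_injective (β := β); rw [← ha, ← ha, mul_add, h1]
  have pb : ∀ x, b (x + l) = b x := by
    intro x; apply Sum.inr_injective (α := α)
    rw [← hb, ← hb, mul_add, add_right_comm, h1]
  have vc : ∀ x : ℕ, ((x : ZMod l)).val = x % l := fun x => ZMod.val_natCast _ _
  have hint : interl (l := l) (fun t => a t.val, fun t => b t.val) = f := by
    funext x
    obtain ⟨y, rfl | rfl⟩ : ∃ y, x = 2 * y ∨ x = 2 * y + 1 := ⟨x / 2, by omega⟩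
    · rw [interl_even, ha]; simp only [vc, per_mod pa]
    · rw [interl_odd, hb]; simp only [vc, per_mod pb]
  refine ⟨(fun t => a t.val, fun t => b t.val), ⟨?_, ?_, ?_⟩, hint⟩
  · intro s t hst
    simp only at hst
    have hs := ZMod.val_lt s
    have ht := ZMod.val_lt t
    have : f (2 * s.val) = f (2 * t.val) := by rw [ha, ha, hst]
    have := h2 (by simp; omega) (by simp; omega) this
    exact ZMod.val_injective _ (by omega)
  · intro s t hst
    simp only at hst
    have hs := ZMod.val_lt s
    have ht := ZMod.val_lt t
    have : f (2 * s.val + 1) = f (2 * t.val + 1) := by rw [hb, hb, hst]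
    have := h2 (by simp; omega) (by simp; omega) this
    exact ZMod.val_injective _ (by omega)
  · intro t
    simp only
    have e : a (t + 1).val = a (t.val + 1) := by
      rw [← per_mod pa (t.val + 1)]
      congr 1
      rw [← vc]; push_cast; simp
    rw [e, ← hG, ← hG, ← ha, ← ha, ← hb]
    refine ⟨h3 _, ?_⟩
    have := h3 (2 * t.val + 1)
    rw [G.adj_comm]; exact this

theorem card_cycD (hl : 2 ≤ l) (hG : ∀ a b, G.Adj (Sum.inl a) (Sum.inr b) ↔ E a b)
    (hll : ∀ a b, ¬ G.Adj (Sum.inl a) (Sum.inl b)) (hrr : ∀ a b, ¬ G.Adj (Sum.inr a) (Sum.inr b)) :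
    (CycF G (2 * l)).ncard = 2 * (CycD E l).ncard := by
  have hinj : ∀ d d' : (ZMod l → α) × (ZMod l → β), interl d = interl d' → d = d' := by
    have : NeZero l := ⟨by omega⟩
    intro d d' h
    refine Prod.ext ?_ ?_ <;> funext t
    · have := congrFun h (2 * t.val)
      rw [interl_even, interl_even] at this
      simpa using this
    · have := congrFun h (2 * t.val + 1)
      rw [interl_odd, interl_odd] at this
      simpa using this
  have : ((CycD E l) ×ˢ (Set.univ : Set Bool)).ncard = (CycF G (2 * l)).ncard := by
    refine Set.ncard_congr
      (fun p _ x => interl p.1 (x + (if p.2 then 2 * l - 1 else 0))) ?_ ?_ ?_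
    · rintro ⟨d, b⟩ ⟨hd, -⟩
      exact CycF_shift (by omega) (interl_mem hl hG hd) _
    · rintro ⟨d, b⟩ ⟨d', b'⟩ ⟨hd, -⟩ ⟨hd', -⟩ he
      simp only at he hd hd'
      have e : 2 * l - 1 = 2 * (l - 1) + 1 := by omega
      have p1 := (interl_mem hl hG hd).1
      have p2 := (interl_mem hl hG hd').1
      have h0 := congrFun he 0
      cases b <;> cases b' <;> simp only [if_true, Bool.false_eq_true, if_false, zero_add] at he h0
      · rw [hinj d d' (funext fun x => by simpa using congrFun he x)]
      · exfalso
        rw [e, interl_odd, ← mul_zero 2, interl_even] at h0; simp at h0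
      · exfalso
        rw [e, interl_odd, ← mul_zero 2, interl_even] at h0; simp at h0
      · rw [hinj d d' (funext fun x => ?_)]
        have := congrFun he (x + 1)
        have e2 : x + 1 + (2 * l - 1) = x + 2 * l := by omega
        rwa [e2, p1, p2] at this
    · intro f hf
      rcases h0 : f 0 with a | b
      · obtain ⟨d, hd, rfl⟩ := interl_surj hl hG hll hrr hf (by simp [h0])
        exact ⟨(d, false), ⟨hd, trivial⟩, by simp⟩
      · have h1 : (f 1).isLeft = true := by
          have := hf.2.2 0
          rw [h0] at this
          rcases h1 : f (0 + 1) with a | a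
          · simp at h1; simp [h1]
          · rw [h1] at this; exact absurd this (hrr _ _)
        obtain ⟨d, hd, hdf⟩ := interl_surj hl hG hll hrr (CycF_shift (by omega) hf 1)
          (by simpa using h1)
        refine ⟨(d, true), ⟨hd, trivial⟩, ?_⟩
        funext x
        simp only [if_true]
        rw [hdf]
        simp only
        have e2 : x + (2 * l - 1) + 1 = x + 2 * l := by omega
        rw [e2, hf.1]
  rw [← this, Set.ncard_prod]
  simp [mul_comm]
end

/-- Tanner edge relation -/
def tE {v k m : ℕ} (Bl : Fin k → Finset (Fin v)) (S : Fin v → Fin k → ZMod m)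
    (a : Fin v × ZMod m) (b : Fin k × ZMod m) : Prop :=
  a.1 ∈ Bl b.1 ∧ a.2 = b.2 + S a.1 b.1

theorem tanner_adj {v k m : ℕ} (Bl : Fin k → Finset (Fin v)) (S : Fin v → Fin k → ZMod m)
    (a : Fin v × ZMod m) (b : Fin k × ZMod m) :
    (qcTannerGraph v k m Bl S).Adj (Sum.inl a) (Sum.inr b) ↔ tE Bl S a b := by
  obtain ⟨a, x⟩ := a
  obtain ⟨b, y⟩ := b
  simp only [qcTannerGraph, SimpleGraph.fromRel_adj, tE]
  constructor
  · rintro ⟨-, ⟨i, r, j, c, h1, h2, h3, h4⟩ | ⟨i, r, j, c, h1, h2, h3, h4⟩⟩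
    · simp only [Sum.inl.injEq, Sum.inr.injEq, Prod.mk.injEq] at h1 h2
      obtain ⟨rfl, rfl⟩ := h1
      obtain ⟨rfl, rfl⟩ := h2
      exact ⟨h3, h4⟩
    · simp at h1
  · rintro ⟨h1, h2⟩
    exact ⟨by simp, Or.inl ⟨a, x, b, y, rfl, rfl, h1, h2⟩⟩

theorem tanner_ll {v k m : ℕ} (Bl : Fin k → Finset (Fin v)) (S : Fin v → Fin k → ZMod m)
    (a b : Fin v × ZMod m) :
    ¬ (qcTannerGraph v k m Bl S).Adj (Sum.inl a) (Sum.inl b) := by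
  simp [qcTannerGraph]

theorem tanner_rr {v k m : ℕ} (Bl : Fin k → Finset (Fin v)) (S : Fin v → Fin k → ZMod m)
    (a b : Fin k × ZMod m) :
    ¬ (qcTannerGraph v k m Bl S).Adj (Sum.inr a) (Sum.inr b) := by
  simp [qcTannerGraph]

/-- underlying cyclic chain -/
def prC {v k m l : ℕ} (d : (ZMod l → Fin v × ZMod m) × (ZMod l → Fin k × ZMod m)) :
    (ZMod l → Fin v) × (ZMod l → Fin k) :=
  (fun t => (d.1 t).1, fun t => (d.2 t).1)

/-- allowable cyclic chains -/
def Alw {v k m : ℕ} (Bl : Fin k → Finset (Fin v)) (S : Fin v → Fin k → ZMod m) (l : ℕ) :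
    Set ((ZMod l → Fin v) × (ZMod l → Fin k)) :=
  {x | ∃ d ∈ CycD (tE Bl S) l, prC d = x}

theorem zmod_ind {l : ℕ} [NeZero l] {P : ZMod l → Prop} (h0 : P 0) (hs : ∀ t, P t → P (t + 1))
    (t : ZMod l) : P t := by
  have : ∀ n : ℕ, P (n : ZMod l) := by
    intro n
    induction n with
    | zero => simpa using h0
    | succ n ih => push_cast; exact hs _ ih
  simpa using this t.val

section
variable {v k m l : ℕ} {Bl : Fin k → Finset (Fin v)} {S : Fin v → Fin k → ZMod m}

theorem cycD_diff [NeZero l] {d d' : (ZMod l → Fin v × ZMod m) × (ZMod l → Fin k × ZMod m)}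
    (hd : d ∈ CycD (tE Bl S) l) (hd' : d' ∈ CycD (tE Bl S) l) (h : prC d = prC d') (t : ZMod l) :
    (d.1 t).2 - (d'.1 t).2 = (d.1 0).2 - (d'.1 0).2 := by
  have e1 : ∀ t, (d.1 t).1 = (d'.1 t).1 := fun t => congrFun (congrArg Prod.fst h) t
  have e2 : ∀ t, (d.2 t).1 = (d'.2 t).1 := fun t => congrFun (congrArg Prod.snd h) t
  induction t using zmod_ind with
  | h0 => rfl
  | hs t ih =>
    rw [← ih]
    obtain ⟨⟨-, a1⟩, ⟨-, a2⟩⟩ := hd.2.2 t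
    obtain ⟨⟨-, b1⟩, ⟨-, b2⟩⟩ := hd'.2.2 t
    rw [a1, a2, b1, b2, e1, e1, e2]; ring

theorem card_Alw [NeZero l] [NeZero m] :
    (CycD (tE Bl S) l).ncard = (Alw Bl S l).ncard * m := by
  have : (CycD (tE Bl S) l).ncard = (Alw Bl S l ×ˢ (Set.univ : Set (ZMod m))).ncard := by
    refine Set.ncard_congr (fun d _ => (prC d, (d.1 0).2)) ?_ ?_ ?_
    · intro d hd; exact ⟨⟨d, hd, rfl⟩, trivial⟩
    · intro d d' hd hd' he
      simp only [Prod.mk.injEq] at he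
      obtain ⟨h, h0⟩ := he
      have h1 := cycD_diff hd hd' h
      have e1 : ∀ t, (d.1 t).1 = (d'.1 t).1 := fun t => congrFun (congrArg Prod.fst h) t
      have e2 : ∀ t, (d.2 t).1 = (d'.2 t).1 := fun t => congrFun (congrArg Prod.snd h) t
      have e3 : ∀ t, (d.1 t).2 = (d'.1 t).2 := by
        intro t; have := h1 t; rw [h0, sub_self, sub_eq_zero] at this; exact this
      refine Prod.ext (funext fun t => Prod.ext (e1 t) (e3 t))
        (funext fun t => Prod.ext (e2 t) ?_)
      have a1 := (hd.2.2 t).1.2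
      have b1 := (hd'.2.2 t).1.2
      rw [e3, e1, e2, b1] at a1
      exact (add_right_cancel a1).symm
    · rintro ⟨x, r⟩ ⟨⟨d, hd, rfl⟩, -⟩
      obtain ⟨s, hs⟩ : ∃ s, s = r - (d.1 0).2 := ⟨_, rfl⟩
      refine ⟨(fun t => ((d.1 t).1, (d.1 t).2 + s), fun t => ((d.2 t).1, (d.2 t).2 + s)),
        ⟨?_, ?_, ?_⟩, ?_⟩
      · intro t t' h
        simp only [Prod.mk.injEq, add_left_inj] at h
        exact hd.1 (Prod.ext h.1 h.2)
      · intro t t' h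
        simp only [Prod.mk.injEq, add_left_inj] at h
        exact hd.2.1 (Prod.ext h.1 h.2)
      · intro t
        obtain ⟨⟨a0, a1⟩, ⟨a3, a2⟩⟩ := hd.2.2 t
        refine ⟨⟨a0, ?_⟩, ⟨a3, ?_⟩⟩
        · simp only; rw [a1]; ring
        · simp only; rw [a2]; ring
      · simp [prC, hs]
  rw [this, Set.ncard_prod]; simp [Set.ncard_univ]

theorem one_ne_zero_l (hl : 2 ≤ l) : (1 : ZMod l) ≠ 0 := by
  have : Fact (1 < l) := ⟨hl⟩
  exact one_ne_zero

theorem Alw_ne1 (hl : 2 ≤ l) {x : (ZMod l → Fin v) × (ZMod l → Fin k)} (hx : x ∈ Alw Bl S l)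
    (t : ZMod l) : x.1 t ≠ x.1 (t + 1) := by
  obtain ⟨d, hd, rfl⟩ := hx
  intro h
  simp only [prC] at h
  obtain ⟨⟨a0, a1⟩, ⟨a3, a2⟩⟩ := hd.2.2 t
  have := hd.1 (Prod.ext h (by rw [a1, a2, h]))
  exact one_ne_zero_l hl (by simpa using this)

theorem Alw_ne2 (hl : 2 ≤ l) {x : (ZMod l → Fin v) × (ZMod l → Fin k)} (hx : x ∈ Alw Bl S l)
    (t : ZMod l) : x.2 t ≠ x.2 (t + 1) := by
  obtain ⟨d, hd, rfl⟩ := hx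
  intro h
  simp only [prC] at h
  have a2 := (hd.2.2 t).2.2
  have b2 := (hd.2.2 (t + 1)).1.2
  rw [b2, h] at a2
  have := hd.2.1 (Prod.ext h (add_right_cancel a2).symm)
  exact one_ne_zero_l hl (by simpa using this)

/-- dihedral action -/
def act (t : ZMod l) (b : Bool) (x : (ZMod l → Fin v) × (ZMod l → Fin k)) :
    (ZMod l → Fin v) × (ZMod l → Fin k) :=
  if b then (fun p => x.1 (t - p), fun p => x.2 (t - p - 1))
  else (fun p => x.1 (p + t), fun p => x.2 (p + t))

theorem act_mem {x : (ZMod l → Fin v) × (ZMod l → Fin k)} (hx : x ∈ Alw Bl S l)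
    (t : ZMod l) (b : Bool) : act t b x ∈ Alw Bl S l := by
  obtain ⟨d, hd, rfl⟩ := hx
  cases b
  · refine ⟨(fun p => d.1 (p + t), fun p => d.2 (p + t)), ⟨?_, ?_, ?_⟩, rfl⟩
    · intro p q h; simpa using hd.1 h
    · intro p q h; simpa using hd.2.1 h
    · intro p
      have := hd.2.2 (p + t)
      simp only
      rwa [add_right_comm p 1 t]
  · refine ⟨(fun p => d.1 (t - p), fun p => d.2 (t - p - 1)), ⟨?_, ?_, ?_⟩, rfl⟩
    · intro p q h; simpa using hd.1 h
    · intro p q h; simpa using hd.2.1 h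
    · intro p
      have := hd.2.2 (t - p - 1)
      simp only
      rw [sub_add_cancel] at this
      rw [← sub_sub t p 1]
      exact ⟨this.2, this.1⟩

theorem act_inv (t : ZMod l) (b : Bool) (x : (ZMod l → Fin v) × (ZMod l → Fin k)) :
    ∃ t' b', act t' b' (act t b x) = x := by
  cases b
  · exact ⟨-t, false, by simp [act]⟩
  · refine ⟨t, true, Prod.ext (funext fun p => ?_) (funext fun p => ?_)⟩
    · simp [act]
    · simp only [act, if_true]; congr 1; ring

theorem Alw_free (hl : 2 ≤ l) (hlm : l ≤ m) (hp : m.Prime)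
    {x : (ZMod l → Fin v) × (ZMod l → Fin k)} (hx : x ∈ Alw Bl S l) (s : ZMod l)
    (h1 : ∀ t, x.1 (t + s) = x.1 t) (h2 : ∀ t, x.2 (t + s) = x.2 t) : s = 0 := by
  have : NeZero l := ⟨by omega⟩
  have : Fact m.Prime := ⟨hp⟩
  by_contra hs
  have hx' := hx
  obtain ⟨d, hd, rfl⟩ := hx
  simp only [prC] at h1 h2
  rcases eq_or_lt_of_le hlm with rfl | hlt
  · have key : ∀ n : ℕ, (d.1 (0 + n * s)).1 = (d.1 0).1 := by
      intro n
      induction n with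
      | zero => simp
      | succ n ih => rw [← ih, ← h1 (0 + n * s)]; congr 2; push_cast; ring
    have := key (s⁻¹).val
    rw [ZMod.natCast_val, ZMod.cast_id', id, inv_mul_cancel₀ hs] at this
    exact Alw_ne1 hl hx' 0 this.symm
  · have hds : (fun p => d.1 (p + s), fun p => d.2 (p + s)) ∈ CycD (tE Bl S) l := by
      refine ⟨?_, ?_, ?_⟩
      · intro p q h; simpa using hd.1 h
      · intro p q h; simpa using hd.2.1 h
      · intro p
        have := hd.2.2 (p + s)
        simp only
        rwa [add_right_comm p 1 s]
    have hdiff := cycD_diff hds hd (by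
      refine Prod.ext (funext fun p => ?_) (funext fun p => ?_)
      · exact h1 p
      · exact h2 p)
    simp only [zero_add] at hdiff
    obtain ⟨σ, hσ⟩ : ∃ σ, σ = (d.1 s).2 - (d.1 0).2 := ⟨_, rfl⟩
    rw [← hσ] at hdiff
    have key : ∀ n : ℕ, (d.1 (n * s)).2 = (d.1 0).2 + n * σ := by
      intro n
      induction n with
      | zero => simp
      | succ n ih =>
        have := hdiff (n * s)
        rw [sub_eq_iff_eq_add, ih] at this
        push_cast
        rw [add_mul, one_mul, this]; ring
    have := key l
    simp only [ZMod.natCast_self, zero_mul, left_eq_add, mul_eq_zero] at this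
    rcases this with h | h
    · rw [ZMod.natCast_eq_zero_iff] at h
      exact absurd (Nat.le_of_dvd (by omega) h) (by omega)
    · apply hs
      apply hd.1
      refine Prod.ext ?_ ?_
      · simpa using h1 0
      · rw [h] at hσ; exact sub_eq_zero.1 hσ.symm

theorem act_mixed (hl : 2 ≤ l)
    {x : (ZMod l → Fin v) × (ZMod l → Fin k)} (hx : x ∈ Alw Bl S l) (t t' : ZMod l)
    (h : act t false x = act t' true x) : False := by
  have : NeZero l := ⟨by omega⟩
  have h1 : ∀ q, x.1 q = x.1 (t + t' - q) := by
    intro q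
    have := congrFun (congrArg Prod.fst h) (q - t)
    simp only [act, Bool.false_eq_true, if_false, if_true, sub_add_cancel] at this
    rw [this]; congr 1; ring
  have h2 : ∀ q, x.2 q = x.2 (t + t' - q - 1) := by
    intro q
    have := congrFun (congrArg Prod.snd h) (q - t)
    simp only [act, Bool.false_eq_true, if_false, if_true, sub_add_cancel] at this
    rw [this]; congr 1; ring
  obtain ⟨n, hn⟩ : ∃ n : ℕ, (n : ZMod l) = t + t' := ⟨(t + t').val, by simp⟩
  obtain ⟨y, rfl | rfl⟩ : ∃ y, n = 2 * y ∨ n = 2 * y + 1 := ⟨n / 2, by omega⟩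
  · apply Alw_ne2 hl hx ((y : ZMod l) - 1)
    rw [h2, ← hn]; congr 1; push_cast; ring
  · apply Alw_ne1 hl hx (y : ZMod l)
    rw [h1, ← hn]; congr 1; push_cast; ring

theorem act_free (hl : 2 ≤ l) (hlm : l ≤ m) (hp : m.Prime)
    {x : (ZMod l → Fin v) × (ZMod l → Fin k)} (hx : x ∈ Alw Bl S l) (t t' : ZMod l) (b b' : Bool)
    (h : act t b x = act t' b' x) : t = t' ∧ b = b' := by
  cases b <;> cases b'
  · refine ⟨sub_eq_zero.1 (Alw_free hl hlm hp hx (t - t') ?_ ?_), rfl⟩ <;> intro p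
    · have := congrFun (congrArg Prod.fst h) (p - t')
      simp only [act, Bool.false_eq_true, if_false, sub_add_cancel] at this
      rw [← this]; congr 1; ring
    · have := congrFun (congrArg Prod.snd h) (p - t')
      simp only [act, Bool.false_eq_true, if_false, sub_add_cancel] at this
      rw [← this]; congr 1; ring
  · exact (act_mixed hl hx _ _ h).elim
  · exact (act_mixed hl hx _ _ h.symm).elim
  · refine ⟨sub_eq_zero.1 (Alw_free hl hlm hp hx (t - t') ?_ ?_), rfl⟩ <;> intro p
    · have := congrFun (congrArg Prod.fst h) (t' - p)
      simp only [act, if_true, sub_sub_cancel] at this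
      rw [← this]; congr 1; ring
    · have := congrFun (congrArg Prod.snd h) (t' - p - 1)
      simp only [act, if_true] at this
      have e : t' - (t' - p - 1) - 1 = p := by ring
      rw [e] at this
      rw [← this]; congr 1; ring

/-- restriction -/
def resC (l : ℕ) (c : (ℕ → Fin v) × (ℕ → Fin k)) : (ZMod l → Fin v) × (ZMod l → Fin k) :=
  (fun t => c.1 t.val, fun t => c.2 t.val)

/-- lift -/
def lifC (x : (ZMod l → Fin v) × (ZMod l → Fin k)) : (ℕ → Fin v) × (ℕ → Fin k) :=
  (fun t => x.1 t, fun t => x.2 t)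

theorem res_lif [NeZero l] (x : (ZMod l → Fin v) × (ZMod l → Fin k)) : resC l (lifC x) = x := by
  simp [resC, lifC]

theorem val_cast_lt {p : ℕ} (h : p < l) : ((p : ZMod l)).val = p := by
  rw [ZMod.val_natCast, Nat.mod_eq_of_lt h]

theorem iso_iff (hl : 0 < l) (c c' : (ℕ → Fin v) × (ℕ → Fin k)) :
    ChainIso v k l c c' ↔ ∃ t b, resC l c' = act t b (resC l c) := by
  have : NeZero l := ⟨by omega⟩
  have e1 : ∀ (t : ℕ) (p : ZMod l), (p + t).val = (p.val + t) % l := by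
    intro t p; rw [← ZMod.val_natCast]; push_cast; simp
  have e2 : ∀ (t : ℕ) (p : ZMod l), ((t : ZMod l) - p).val = (t + (l - p.val)) % l := by
    intro t p; rw [← ZMod.val_natCast, Nat.cast_add, Nat.cast_sub (ZMod.val_lt p).le]; simp
    simp only [sub_eq_add_neg]
  have e3 : ∀ (t : ℕ) (p : ZMod l),
      ((t : ZMod l) - p - 1).val = (t + (l - p.val) + (l - 1)) % l := by
    intro t p
    rw [← ZMod.val_natCast, Nat.cast_add, Nat.cast_add, Nat.cast_sub (ZMod.val_lt p).le,
      Nat.cast_sub hl]; simp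
    simp only [sub_eq_add_neg]
  constructor
  · rintro ⟨t, h | h⟩
    · refine ⟨t, false, Prod.ext (funext fun p => ?_) (funext fun p => ?_)⟩ <;>
        simp only [resC, act, Bool.false_eq_true, if_false, e1]
      · exact (h _ (ZMod.val_lt p)).1
      · exact (h _ (ZMod.val_lt p)).2
    · refine ⟨t, true, Prod.ext (funext fun p => ?_) (funext fun p => ?_)⟩ <;>
        simp only [resC, act, if_true, e2, e3]
      · exact (h _ (ZMod.val_lt p)).1
      · exact (h _ (ZMod.val_lt p)).2
  · rintro ⟨t, b, h⟩
    obtain ⟨t, rfl⟩ : ∃ n : ℕ, (n : ZMod l) = t := ⟨t.val, by simp⟩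
    refine ⟨t, ?_⟩
    cases b
    · left
      intro p hp
      have h1 := congrFun (congrArg Prod.fst h) p
      have h2 := congrFun (congrArg Prod.snd h) p
      simp only [resC, act, Bool.false_eq_true, if_false, e1, val_cast_lt hp] at h1 h2
      exact ⟨h1, h2⟩
    · right
      intro p hp
      have h1 := congrFun (congrArg Prod.fst h) p
      have h2 := congrFun (congrArg Prod.snd h) p
      simp only [resC, act, if_true, e2, e3, val_cast_lt hp] at h1 h2
      exact ⟨h1, h2⟩

theorem val_succ_case [NeZero l] (t : ZMod l) :
    ((t + 1).val = t.val + 1 ∧ t.val + 1 < l) ∨ ((t + 1).val = 0 ∧ t.val + 1 = l) := by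
  have e : (t + 1).val = (t.val + 1) % l := by
    rw [← ZMod.val_natCast]; push_cast; simp
  have := ZMod.val_lt t
  rcases Nat.lt_or_ge (t.val + 1) l with h | h
  · left; rw [e, Nat.mod_eq_of_lt h]; exact ⟨rfl, h⟩
  · right
    have h3 : t.val + 1 = l := by omega
    rw [e, h3, Nat.mod_self]; exact ⟨rfl, rfl⟩

theorem chain_res_mem (hl : 0 < l) {c : (ℕ → Fin v) × (ℕ → Fin k)}
    (hc : IsQcCycleChain v k m l Bl S c.1 c.2) (ha : QcAllowable v k m l S c.1 c.2) :
    resC l c ∈ Alw Bl S l := by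
  have : NeZero l := ⟨by omega⟩
  obtain ⟨i, j⟩ := c
  simp only at hc ha
  obtain ⟨h0, h1, h2⟩ := hc
  have hrow : qcRow v k m S i j 0 l = qcRow v k m S i j 0 0 := by
    rw [qcRow_eq_sum, h2]; simp [qcRow]
  refine ⟨(fun t => (i t.val, qcRow v k m S i j 0 t.val),
    fun t => (j t.val, qcCol v k m S i j 0 t.val)), ⟨?_, ?_, ?_⟩, rfl⟩
  · intro p q h
    by_contra hne
    exact (ha 0 p.val q.val (ZMod.val_lt p) (ZMod.val_lt q)
      (fun h => hne (ZMod.val_injective _ h))).1 h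
  · intro p q h
    by_contra hne
    exact (ha 0 p.val q.val (ZMod.val_lt p) (ZMod.val_lt q)
      (fun h => hne (ZMod.val_injective _ h))).2 h
  · intro t
    have ei : i (t + 1).val = i (t.val + 1) := by
      rcases val_succ_case t with ⟨h, -⟩ | ⟨h, h'⟩
      · rw [h]
      · rw [h, h', h0]
    have er : qcRow v k m S i j 0 (t + 1).val = qcRow v k m S i j 0 (t.val + 1) := by
      rcases val_succ_case t with ⟨h, -⟩ | ⟨h, h'⟩
      · rw [h]
      · rw [h, h', hrow]
    have := h1 t.val (ZMod.val_lt t)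
    refine ⟨⟨this.1, ?_⟩, ⟨?_, ?_⟩⟩
    · simp [qcCol]
    · simp only; rw [ei]; exact this.2.1
    · simp only; rw [er, ei]; rfl

theorem chain_of_mem (hl : 2 ≤ l) {x : (ZMod l → Fin v) × (ZMod l → Fin k)}
    (hx : x ∈ Alw Bl S l) :
    IsQcCycleChain v k m l Bl S (lifC x).1 (lifC x).2 ∧
      QcAllowable v k m l S (lifC x).1 (lifC x).2 := by
  have : NeZero l := ⟨by omega⟩
  have n1 := Alw_ne1 hl hx
  have n2 := Alw_ne2 hl hx
  obtain ⟨d, hd, rfl⟩ := hx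
  have hrow : ∀ r (t : ℕ), qcRow v k m S (lifC (prC d)).1 (lifC (prC d)).2 r t
      = (d.1 t).2 + (r - (d.1 0).2) := by
    intro r t
    induction t with
    | zero => simp [qcRow]
    | succ t ih =>
      rw [qcRow, ih]
      obtain ⟨⟨a0, a1⟩, ⟨a3, a2⟩⟩ := hd.2.2 t
      simp only [lifC, prC]
      push_cast
      rw [a1, a2]; ring
  have hcol : ∀ r (t : ℕ), qcCol v k m S (lifC (prC d)).1 (lifC (prC d)).2 r t
      = (d.2 t).2 + (r - (d.1 0).2) := by
    intro r t
    rw [qcCol, hrow, (hd.2.2 t).1.2]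
    simp only [lifC, prC]; ring
  refine ⟨⟨by simp [lifC], ?_, ?_⟩, ?_⟩
  · intro t ht
    refine ⟨(hd.2.2 t).1.1, ?_, ?_, ?_⟩
    · have := (hd.2.2 t).2.1
      simp only [lifC, prC]; push_cast; exact this
    · have := n1 t
      simp only [lifC]; push_cast; exact this
    · have := n2 t
      simp only [lifC]; rw [ZMod.natCast_mod]; push_cast; exact this
  · have := hrow 0 l
    rw [qcRow_eq_sum] at this
    rw [zero_sub, ZMod.natCast_self, zero_sub, add_neg_cancel, neg_eq_zero] at this; exact this
  · intro r p q hp hq hne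
    rw [hrow, hrow, hcol, hcol]
    refine ⟨fun h => hne ?_, fun h => hne ?_⟩
    · simp only [lifC, prC, Prod.mk.injEq, add_left_inj] at h
      exact natCast_inj_lt hp hq (hd.1 (Prod.ext h.1 h.2))
    · simp only [lifC, prC, Prod.mk.injEq, add_left_inj] at h
      exact natCast_inj_lt hp hq (hd.2.1 (Prod.ext h.1 h.2))

theorem card_R (hl : 2 ≤ l) (hlm : l ≤ m) (hp : m.Prime)
    (R : Set ((ℕ → Fin v) × (ℕ → Fin k)))
    (hR : ∀ c ∈ R, IsQcCycleChain v k m l Bl S c.1 c.2 ∧ QcAllowable v k m l S c.1 c.2)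
    (hU : ∀ c : (ℕ → Fin v) × (ℕ → Fin k),
      IsQcCycleChain v k m l Bl S c.1 c.2 → QcAllowable v k m l S c.1 c.2 →
        ∃! c', c' ∈ R ∧ ChainIso v k l c c') :
    (Alw Bl S l).ncard = 2 * l * R.ncard := by
  have : NeZero l := ⟨by omega⟩
  have hl0 : 0 < l := by omega
  have : (R ×ˢ (Set.univ : Set (ZMod l × Bool))).ncard = (Alw Bl S l).ncard := by
    refine Set.ncard_congr (fun p _ => act p.2.1 p.2.2 (resC l p.1)) ?_ ?_ ?_
    · rintro ⟨c, t, b⟩ ⟨hc, -⟩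
      exact act_mem (chain_res_mem hl0 (hR c hc).1 (hR c hc).2) _ _
    · rintro ⟨c, t, b⟩ ⟨c', t', b'⟩ ⟨hc, -⟩ ⟨hc', -⟩ he
      simp only at hc hc' he
      have hm := chain_res_mem hl0 (hR c hc).1 (hR c hc).2
      have hy := act_mem hm t b
      obtain ⟨q1, q2⟩ := chain_of_mem hl hy
      have i1 : ChainIso v k l (lifC (act t b (resC l c))) c := by
        rw [iso_iff hl0, res_lif]
        obtain ⟨s, b1, h⟩ := act_inv t b (resC l c)
        exact ⟨s, b1, h.symm⟩
      have i2 : ChainIso v k l (lifC (act t b (resC l c))) c' := by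
        rw [iso_iff hl0, res_lif, he]
        obtain ⟨s, b1, h⟩ := act_inv t' b' (resC l c')
        exact ⟨s, b1, h.symm⟩
      have hcc : c = c' := (hU _ q1 q2).unique ⟨hc, i1⟩ ⟨hc', i2⟩
      subst hcc
      obtain ⟨rfl, rfl⟩ := act_free hl hlm hp hm _ _ _ _ he
      rfl
    · intro x hx
      obtain ⟨q1, q2⟩ := chain_of_mem hl hx
      obtain ⟨c, ⟨hc, hi⟩, -⟩ := hU _ q1 q2
      rw [iso_iff hl0, res_lif] at hi
      obtain ⟨t, b, h⟩ := hi
      obtain ⟨s, b1, h'⟩ := act_inv t b x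
      exact ⟨(c, s, b1), ⟨hc, trivial⟩, by simp only; rw [h, h']⟩
  rw [← this, Set.ncard_prod]
  simp [Set.ncard_univ]; ring
end

theorem prime_cpm_size_cycle_count
    (v k m l : ℕ) [NeZero m] (hp : m.Prime) (hl : 0 < l)
    (Bl : Fin k → Finset (Fin v)) (S : Fin v → Fin k → ZMod m) :
    -- In general, when `m` is prime, `r(L) = 1` or `r(L) = m`:
    (∀ (i : ℕ → Fin v) (j : ℕ → Fin k),
      IsQcCycleChain v k m l Bl S i j → QcAllowable v k m l S i j →
        ((Finset.image (fun r : ZMod m => qcWalkVerts v k m l S i j r)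
            Finset.univ).card = 1 ∨
         (Finset.image (fun r : ZMod m => qcWalkVerts v k m l S i j r)
            Finset.univ).card = m)) ∧
    (l ≤ m →
      -- every allowable 2l-cycle chain has `n(L) < m` and yields `r(L) = m`
      -- distinct 2l-cycles:
      (∀ (i : ℕ → Fin v) (j : ℕ → Fin k),
        IsQcCycleChain v k m l Bl S i j → QcAllowable v k m l S i j →
          chainN v k l i j < m ∧
          (Finset.image (fun r : ZMod m => qcWalkVerts v k m l S i j r)
            Finset.univ).card = m) ∧
      -- consequently, for any complete set `R` of representatives of the
      -- isomorphism classes of allowable 2l-cycle chains, the number of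
      -- 2l-cycles in the Tanner graph (counted as closed cycle walks, each
      -- cycle being traversed by exactly `4l` of them) equals `m * |R|`:
      (∀ R : Set ((ℕ → Fin v) × (ℕ → Fin k)),
        (∀ c ∈ R, IsQcCycleChain v k m l Bl S c.1 c.2 ∧
          QcAllowable v k m l S c.1 c.2) →
        (∀ c : (ℕ → Fin v) × (ℕ → Fin k),
          IsQcCycleChain v k m l Bl S c.1 c.2 → QcAllowable v k m l S c.1 c.2 →
            ∃! c', c' ∈ R ∧ ChainIso v k l c c') →
        Set.ncard {p : (u : TannerVertex v k m) ×
            (qcTannerGraph v k m Bl S).Walk u u |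
          p.2.IsCycle ∧ p.2.length = 2 * l} = 4 * l * (m * R.ncard))) := by
  refine ⟨?_, fun hlm => ⟨?_, ?_⟩⟩
  · intro i j _ _
    have := card_image_const_or_inj (fun r : ZMod m => qcWalkVerts v k m l S i j r)
      (fun x y hne h q => verts_shift_all v k m l hp S i j x y hne h q)
    rwa [ZMod.card] at this
  · intro i j hc _
    refine ⟨chainN_lt hp hl hlm hc, ?_⟩
    rw [Finset.card_image_of_injective _ (verts_inj hp hl hlm hc), Finset.card_univ, ZMod.card]
  · intro R hR hU
    rcases Nat.lt_or_ge l 2 with h | h2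
    · have hRe : R = ∅ := by
        by_contra hne
        obtain ⟨c, hc⟩ := Set.nonempty_iff_ne_empty.2 hne
        have := chain_two_le hl (hR c hc).1
        omega
      have hWe : {p : (u : TannerVertex v k m) × (qcTannerGraph v k m Bl S).Walk u u |
          p.2.IsCycle ∧ p.2.length = 2 * l} = ∅ := by
        ext p
        simp only [Set.mem_ofPred_eq, Set.mem_empty_iff_false, iff_false, not_and]
        intro hc
        have := hc.three_le_length
        omega
      rw [hRe, hWe]; simp
    · have : NeZero l := ⟨by omega⟩
      rw [card_cycF _ _ (by omega),
        card_cycD h2 (tanner_adj Bl S) (tanner_ll Bl S) (tanner_rr Bl S),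
        card_Alw, card_R h2 hlm hp R hR hU]
      ring
end
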